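/- arXiv:2507.01566 — 4 statements merged into one kernel-verified Lean document; each statement's English description precedes it below -/
import Mathlib

section
/- For every H₀ ∈ 𝓗 there exist a sequence (π_n)_{n≥0} of affine lines in ℝ², a sequence (H_n)_{n≥1} of non-degenerate centrally symmetric convex hexagons, and positive reals (a_n)_{n≥1}, (b_n)_{n≥1} such that: H₁ = S_{π₀}(H₀) and H_{n+1} = S_{π_n}(H_n) for all n ≥ 1; |H_n| = |H₀| for all n ≥ 1; each H_n has two opposite sides of common length b_n and four remaining sides of common length a_n; and for all n ≥ 1 the inequalities (i) 4a_{n+1} + 2b_{n+1} ≤ 4a_n + 2b_n, (ii) 2a_{n+1} ≤ a_n + b_n, and (iii) b_{n+1} ≤ a_n hold. -/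
open MeasureTheory Metric Filter Real Set
open scoped Topology ENNReal NNReal RealInnerProductSpace

noncomputable section

/-- The Euclidean plane. -/
abbrev E2 : Type := EuclideanSpace ℝ (Fin 2)

/-- The line through `x` with direction `v`. -/
def lineThrough (x v : E2) : Set E2 := {y : E2 | ∃ t : ℝ, y = x + t • v}

/-- Steiner symmetrization of `A` with respect to the affine line `{x | ⟪x, v⟫ = c}`,
where `v` is a unit normal vector of the line. -/
def steiner (v : E2) (c : ℝ) (A : Set E2) : Set E2 :=
  {y : E2 | ∃ x : E2, ⟪x, v⟫ = c ∧ (A ∩ lineThrough x v).Nonempty ∧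
    ∃ r : ℝ, y = x + r • v ∧
      ENNReal.ofReal (2 * |r|) ≤ μH[1] (A ∩ lineThrough x v)}

/-- The class `𝓗` of centrally symmetric convex hexagons (possibly degenerated to
parallelograms), i.e. the convex polygons tiling the plane by translations. -/
def Hex (H : Set E2) : Prop :=
  (∃ x₀ p q r : E2, H = (fun y => x₀ + y) '' convexHull ℝ ({p, q, r, -p, -q, -r} : Set E2)) ∧
  (interior H).Nonempty

/-- The `k`-th vertex of the standard regular hexagon. -/
def hexVertex (k : ℕ) : E2 :=
  (WithLp.equiv 2 (Fin 2 → ℝ)).symm ![Real.cos (k * π / 3), Real.sin (k * π / 3)]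

/-- The standard regular hexagon, with vertices `(cos (kπ/3), sin (kπ/3))`, `k = 0, …, 5`. -/
def stdHexagon : Set E2 := convexHull ℝ (Set.range fun k : Fin 6 => hexVertex k)

/-- A similarity of the plane (composition of a rotation, a dilation and a translation,
possibly with a reflection). -/
def IsSimilarity (f : E2 → E2) : Prop :=
  ∃ s : ℝ, 0 < s ∧ ∀ x y, dist (f x) (f y) = s * dist x y

/-- A regular hexagon is any image of the standard one under a similarity. -/
def IsRegularHexagon (H : Set E2) : Prop := ∃ f : E2 → E2, IsSimilarity f ∧ H = f '' stdHexagon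

/-- Convergence of a sequence of sets in the Hausdorff distance. -/
def HausdorffTendsto (Hn : ℕ → Set E2) (H : Set E2) : Prop :=
  Tendsto (fun n => EMetric.hausdorffEdist (Hn n) H) atTop (𝓝 0)

/-- The planar cross product (determinant) of two vectors. -/
def det2 (u w : E2) : ℝ := u 0 * w 1 - u 1 * w 0

/-- `A, B, C, D, E, F` are (consecutive) vertices of the centrally symmetric hexagon `H`:
`H` is their convex hull, `D, E, F` are the antipodes of `A, B, C` with respect to a center
`o`, and `H` has nonempty interior. -/
def HexWithVertices (A B C D E F : E2) (H : Set E2) : Prop :=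
  H = convexHull ℝ ({A, B, C, D, E, F} : Set E2) ∧
  (∃ o : E2, D = (2:ℝ) • o - A ∧ E = (2:ℝ) • o - B ∧ F = (2:ℝ) • o - C) ∧
  (interior H).Nonempty

/-- The vertices `A, B, C, D, E, F` are listed in counterclockwise order. -/
def CCWList (A B C D E F : E2) : Prop :=
  0 ≤ det2 (B - A) (C - B) ∧ 0 ≤ det2 (C - B) (D - C) ∧ 0 ≤ det2 (D - C) (E - D) ∧
  0 ≤ det2 (E - D) (F - E) ∧ 0 ≤ det2 (F - E) (A - F) ∧ 0 ≤ det2 (A - F) (B - A)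

/-- The six vertices are distinct and no three of them are collinear. -/
def NondegenerateHex (A B C D E F : E2) : Prop :=
  [A, B, C, D, E, F].Pairwise (· ≠ ·) ∧
  ∀ P Q R : E2, P ∈ ({A, B, C, D, E, F} : Set E2) → Q ∈ ({A, B, C, D, E, F} : Set E2) →
    R ∈ ({A, B, C, D, E, F} : Set E2) → P ≠ Q → P ≠ R → Q ≠ R →
      ¬ Collinear ℝ ({P, Q, R} : Set E2)

/-!
List the vertices of the hexagon as `o ± p`, `o ± q`, `o ± r` in counterclockwise order (for a
parallelogram, one pair of vertices consists of midpoints of sides), and symmetrize in the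
direction `v` of the diagonal from `o + p` to `o + r`, with respect to the line through `o`
orthogonal to `v`. Let `k` be the distance of `o` from this diagonal and `ℓ > k` that of `o` from
the parallel through `o + q`. The chords parallel to `v` have lengths that depend only on
`‖r - p‖`, `k` and `ℓ`, so the symmetrization slides `o ± q` and the diagonals from `o ± p` to
`o ± r` along `v` until they are bisected by the line. The two new sides orthogonal to `v` are no
longer than the sides joining `o ± r` to `o ∓ p`, which they replace. The other four sides have
equal length, and twice one of them is the vector sum of the two sides at `o + q`, one of them
reflected in the line; the triangle inequality gives the remaining estimate. From the second step
on, the replaced sides belong to the four equal ones. Area is preserved by Fubini's theorem.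
-/

section Coordinates

lemma det2_self (u : E2) : det2 u u = 0 := by
  unfold det2
  ring

lemma det2_swap (u w : E2) : det2 w u = -det2 u w := by
  unfold det2
  ring

lemma det2_neg_left (u w : E2) : det2 (-u) w = -det2 u w := by
  simp only [det2, PiLp.neg_apply]
  ring

lemma det2_neg_right (u w : E2) : det2 u (-w) = -det2 u w := by
  simp only [det2, PiLp.neg_apply]
  ring

lemma isLinearMap_det2 (u : E2) : IsLinearMap ℝ (det2 u) where
  map_add x y := by
    simp only [det2, PiLp.add_apply]
    ring
  map_smul t x := by
    simp only [det2, PiLp.smul_apply, smul_eq_mul]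
    ring

lemma det2_smul_eq (p q r : E2) :
    det2 p r • q = det2 q r • p + det2 p q • r := by
  refine PiLp.ext (Fin.forall_fin_two.2 ⟨?_, ?_⟩) <;>
  · simp only [det2, PiLp.add_apply, PiLp.smul_apply, smul_eq_mul]
    ring

lemma continuous_det2_sub (v o : E2) : Continuous fun y : E2 => det2 (y - o) v := by
  unfold det2
  fun_prop

/-- The vector with coordinates `(s, t)` in the basis consisting of `v` rotated clockwise by a
right angle and of `v`; thus `t` is measured in the direction of symmetrization `v`. -/
def frame (v : E2) (s t : ℝ) : E2 := s • !₂[v 1, -v 0] + t • v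

lemma frame_add (v : E2) (s t s' t' : ℝ) :
    frame v s t + frame v s' t' = frame v (s + s') (t + t') := by
  unfold frame
  module

lemma frame_sub (v : E2) (s t s' t' : ℝ) :
    frame v s t - frame v s' t' = frame v (s - s') (t - t') := by
  unfold frame
  module

lemma frame_smul (v : E2) (c s t : ℝ) : c • frame v s t = frame v (c * s) (c * t) := by
  unfold frame
  module

lemma frame_neg (v : E2) (s t : ℝ) : -frame v s t = frame v (-s) (-t) := by
  unfold frame
  module

lemma frame_zero_one (v : E2) : frame v 0 1 = v := by
  unfold frame
  module

lemma add_frame_zero_add_smul (v o : E2) (s t : ℝ) :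
    o + frame v s 0 + t • v = o + frame v s t := by
  unfold frame
  module

variable {v : E2} (hv : ‖v‖ = 1)
include hv

lemma sq_add_sq_of_norm_eq_one : v 0 ^ 2 + v 1 ^ 2 = 1 := by
  rw [← Fin.sum_univ_two fun i => v i ^ 2, ← EuclideanSpace.real_norm_sq_eq, hv, one_pow]

lemma frame_det2_inner (y : E2) : frame v (det2 y v) ⟪y, v⟫ = y := by
  have h := sq_add_sq_of_norm_eq_one hv
  refine PiLp.ext (Fin.forall_fin_two.2 ⟨?_, ?_⟩) <;>
    simp only [frame, det2, PiLp.inner_apply, Fin.sum_univ_two, PiLp.add_apply, PiLp.smul_apply,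
      smul_eq_mul, Matrix.cons_val_zero, Matrix.cons_val_one, RCLike.inner_apply, conj_trivial]
  · linear_combination y 0 * h
  · linear_combination y 1 * h

lemma det2_frame (s t s' t' : ℝ) : det2 (frame v s t) (frame v s' t') = s * t' - t * s' := by
  simp only [det2, frame, PiLp.add_apply, PiLp.smul_apply, smul_eq_mul, Matrix.cons_val_zero,
    Matrix.cons_val_one]
  linear_combination (s * t' - t * s') * sq_add_sq_of_norm_eq_one hv

lemma inner_frame (s t s' t' : ℝ) : ⟪frame v s t, frame v s' t'⟫ = s * s' + t * t' := by
  simp only [PiLp.inner_apply, Fin.sum_univ_two, frame, PiLp.add_apply, PiLp.smul_apply,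
    smul_eq_mul, Matrix.cons_val_zero, Matrix.cons_val_one, RCLike.inner_apply, conj_trivial]
  linear_combination (s * s' + t * t') * sq_add_sq_of_norm_eq_one hv

lemma det2_frame_self (s t : ℝ) : det2 (frame v s t) v = s := by
  nth_rw 2 [← frame_zero_one v]
  rw [det2_frame hv, mul_one, mul_zero, sub_zero]

lemma inner_frame_self (s t : ℝ) : ⟪frame v s t, v⟫ = t := by
  nth_rw 2 [← frame_zero_one v]
  rw [inner_frame hv, mul_zero, zero_add, mul_one]

lemma norm_frame (s t : ℝ) : ‖frame v s t‖ = √(s ^ 2 + t ^ 2) := by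
  rw [norm_eq_sqrt_real_inner, inner_frame hv, sq, sq]

lemma frame_inj {s t s' t' : ℝ} : frame v s t = frame v s' t' ↔ s = s' ∧ t = t' := by
  rw [← sub_eq_zero, frame_sub, ← norm_eq_zero, norm_frame hv, Real.sqrt_eq_zero (by positivity),
    add_eq_zero_iff_of_nonneg (sq_nonneg _) (sq_nonneg _)]
  simp only [sq_eq_zero_iff, sub_eq_zero]

lemma measurePreserving_add_frame (o : E2) :
    MeasurePreserving fun z : ℝ × ℝ => o + frame v z.1 z.2 := by
  let rotation : E2 →ₗᵢ[ℝ] E2 :=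
    { toFun := fun y => frame v (y 0) (y 1)
      map_add' := fun x y => (frame_add v _ _ _ _).symm
      map_smul' := fun c y => (frame_smul v c _ _).symm
      norm_map' := fun y => (norm_frame hv _ _).trans (by
        rw [EuclideanSpace.norm_eq, Fin.sum_univ_two, norm_eq_abs, norm_eq_abs, sq_abs, sq_abs]) }
  exact (measurePreserving_add_left volume o).comp <|
    (rotation.toLinearIsometryEquiv rfl).measurePreserving.comp <|
    (PiLp.volume_preserving_toLp (Fin 2)).comp (volume_preserving_finTwoArrow ℝ).symm

end Coordinates

section Steiner

/-- The intersection of `A` with the line of abscissa `s` in the frame of `v` with origin `o`, as a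
set of ordinates. Taking `o` on the axis of the symmetrization makes the symmetrized slices
centred at `0`. -/
def slice (v o : E2) (A : Set E2) (s : ℝ) : Set ℝ := {t | o + frame v s t ∈ A}

lemma inter_lineThrough_frame (v o : E2) (A : Set E2) (s : ℝ) :
    A ∩ lineThrough (o + frame v s 0) v = (fun t => o + frame v s t) '' slice v o A s := by
  ext y
  constructor
  · rintro ⟨hy, t, rfl⟩
    rw [add_frame_zero_add_smul] at hy ⊢
    exact ⟨t, hy, rfl⟩
  · rintro ⟨t, ht, rfl⟩
    exact ⟨ht, t, (add_frame_zero_add_smul v o s t).symm⟩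

lemma volume_setOf_two_mul_abs_le (a : ℝ≥0∞) :
    volume {t : ℝ | ENNReal.ofReal (2 * |t|) ≤ a} = a := by
  induction a with
  | top => simp
  | coe a =>
    have hball : {t : ℝ | ENNReal.ofReal (2 * |t|) ≤ a} = closedBall 0 (a / 2) := by
      ext t
      rw [mem_ofPred_eq, mem_closedBall_zero_iff, norm_eq_abs, le_div_iff₀' two_pos,
        ← ENNReal.ofReal_coe_nnreal, ENNReal.ofReal_le_ofReal_iff a.coe_nonneg]
    rw [hball, Real.volume_closedBall, mul_div_cancel₀ _ two_ne_zero, ENNReal.ofReal_coe_nnreal]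

variable {v : E2} (hv : ‖v‖ = 1) (o : E2)
include hv

lemma add_frame_coords (y : E2) : o + frame v (det2 (y - o) v) ⟪y - o, v⟫ = y := by
  rw [frame_det2_inner hv, add_sub_cancel]

lemma hausdorffMeasure_inter_lineThrough_frame (A : Set E2) (s : ℝ) :
    μH[1] (A ∩ lineThrough (o + frame v s 0) v) = volume (slice v o A s) := by
  have hisom : Isometry fun t => o + frame v s t := Isometry.of_dist_eq fun t t' => by
    rw [dist_add_left, dist_eq_norm, frame_sub, norm_frame hv, sub_self, zero_pow two_ne_zero,
      zero_add, Real.sqrt_sq_eq_abs, Real.dist_eq]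
  rw [inter_lineThrough_frame, hisom.hausdorffMeasure_image (.inl zero_le_one),
    hausdorffMeasure_real]

lemma add_frame_mem_steiner {A : Set E2} {s t : ℝ} :
    o + frame v s t ∈ steiner v ⟪o, v⟫ A ↔
      (slice v o A s).Nonempty ∧ ENNReal.ofReal (2 * |t|) ≤ volume (slice v o A s) := by
  constructor
  · rintro ⟨x, hx, hne, r, hy, hr⟩
    obtain ⟨s', rfl⟩ : ∃ s', x = o + frame v s' 0 :=
      ⟨det2 (x - o) v, by rw [← sub_eq_zero.2 hx, ← inner_sub_left, add_frame_coords hv]⟩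
    rw [add_frame_zero_add_smul, add_right_inj, frame_inj hv] at hy
    obtain ⟨rfl, rfl⟩ := hy
    rw [inter_lineThrough_frame, image_nonempty] at hne
    rw [hausdorffMeasure_inter_lineThrough_frame hv] at hr
    exact ⟨hne, hr⟩
  · rintro ⟨hne, ht⟩
    refine ⟨o + frame v s 0, ?_, ?_, t, (add_frame_zero_add_smul v o s t).symm, ?_⟩
    · rw [inner_add_left, inner_frame_self hv, add_zero]
    · rw [inter_lineThrough_frame]
      exact hne.image _
    · rwa [hausdorffMeasure_inter_lineThrough_frame hv]

lemma slice_steiner (A : Set E2) (s : ℝ) :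
    slice v o (steiner v ⟪o, v⟫ A) s =
      {t | (slice v o A s).Nonempty ∧ ENNReal.ofReal (2 * |t|) ≤ volume (slice v o A s)} :=
  Set.ext fun _ => add_frame_mem_steiner hv o

lemma volume_slice_steiner (A : Set E2) (s : ℝ) :
    volume (slice v o (steiner v ⟪o, v⟫ A) s) = volume (slice v o A s) := by
  rw [slice_steiner hv]
  rcases (slice v o A s).eq_empty_or_nonempty with hs | hs
  · simp only [hs, Set.not_nonempty_empty, false_and, ofPred_false, measure_empty]
  · simp only [hs, true_and, volume_setOf_two_mul_abs_le]

lemma eq_of_slice_eq {A B : Set E2} (h : ∀ s, slice v o A s = slice v o B s) : A = B := by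
  ext y
  rw [← add_frame_coords hv o y]
  exact Set.ext_iff.1 (h _) _

lemma measurable_volume_slice {A : Set E2} (hA : MeasurableSet A) :
    Measurable fun s => volume (slice v o A s) :=
  measurable_measure_prodMk_left ((measurePreserving_add_frame hv o).measurable hA)

lemma volume_eq_lintegral_slice {A : Set E2} (hA : MeasurableSet A) :
    volume A = ∫⁻ s, volume (slice v o A s) := by
  have h := measurePreserving_add_frame hv o
  rw [← h.measure_preimage hA.nullMeasurableSet, Measure.volume_eq_prod,
    Measure.prod_apply (h.measurable hA)]
  rfl

lemma isCompact_setOf_slice_nonempty {A : Set E2} (hA : IsCompact A) :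
    IsCompact {s | (slice v o A s).Nonempty} := by
  convert hA.image (continuous_det2_sub v o) using 1
  ext s
  constructor
  · rintro ⟨t, ht⟩
    exact ⟨_, ht, (congrArg (det2 · v) (add_sub_cancel_left o _)).trans (det2_frame_self hv s t)⟩
  · rintro ⟨y, hy, rfl⟩
    exact ⟨⟪y - o, v⟫, by rwa [slice, mem_ofPred_eq, add_frame_coords hv]⟩

lemma measurableSet_steiner {A : Set E2} (hA : IsCompact A) :
    MeasurableSet (steiner v ⟪o, v⟫ A) := by
  have hcoords : Measurable fun y : E2 => det2 (y - o) v := (continuous_det2_sub v o).measurable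
  have hsteiner : steiner v ⟪o, v⟫ A =
      {y | (slice v o A (det2 (y - o) v)).Nonempty} ∩
      {y | ENNReal.ofReal (2 * |⟪y - o, v⟫|) ≤ volume (slice v o A (det2 (y - o) v))} := by
    ext y
    nth_rw 1 [← add_frame_coords hv o y]
    exact add_frame_mem_steiner hv o
  rw [hsteiner]
  exact (hcoords (isCompact_setOf_slice_nonempty hv o hA).measurableSet).inter
    (measurableSet_le (by fun_prop) ((measurable_volume_slice hv o hA.measurableSet).comp hcoords))

omit o in
theorem volume_steiner (c : ℝ) {A : Set E2} (hA : IsCompact A) :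
    volume (steiner v c A) = volume A := by
  have hc : c = ⟪c • v, v⟫ := by
    rw [real_inner_smul_left, real_inner_self_eq_norm_sq, hv, one_pow, mul_one]
  rw [hc, volume_eq_lintegral_slice hv (c • v) (measurableSet_steiner hv _ hA),
    volume_eq_lintegral_slice hv (c • v) hA.measurableSet]
  simp only [volume_slice_steiner hv]

lemma slice_steiner_of_eq_closedBall {A : Set E2} {s m ρ : ℝ} (hρ : 0 ≤ ρ)
    (h : slice v o A s = closedBall m ρ) :
    slice v o (steiner v ⟪o, v⟫ A) s = closedBall 0 ρ := by
  ext t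
  rw [slice_steiner hv, h, Real.volume_closedBall, mem_ofPred_eq, mem_closedBall_zero_iff,
    norm_eq_abs, ENNReal.ofReal_le_ofReal_iff (by positivity), mul_le_mul_iff_right₀ two_pos]
  exact and_iff_right (nonempty_closedBall.2 hρ)

lemma slice_steiner_of_eq_empty {A : Set E2} {s : ℝ} (h : slice v o A s = ∅) :
    slice v o (steiner v ⟪o, v⟫ A) s = ∅ := by
  simp only [slice_steiner hv, h, Set.not_nonempty_empty, false_and, ofPred_false]

end Steiner

section CentralHull

variable {E : Type*} [AddCommGroup E] [Module ℝ E]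

/-- The convex hull of the points `o ± p`, `o ± q`, `o ± r`, listed in no particular order. In the
plane it is a centrally symmetric hexagon, possibly degenerate, with centre `o`. -/
def centralHull (o p q r : E) : Set E :=
  convexHull ℝ {o + p, o + q, o + r, o - p, o - q, o - r}

variable (o p q r : E)

lemma centralHull_rotate : centralHull o (-r) p q = centralHull o p q r := by
  unfold centralHull
  congr 1
  ext y
  simp only [mem_insert_iff, mem_singleton_iff, sub_neg_eq_add, ← sub_eq_add_neg]
  tauto

lemma centralHull_swap : centralHull o r q p = centralHull o p q r := by
  unfold centralHull
  congr 1
  ext y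
  simp only [mem_insert_iff, mem_singleton_iff]
  tauto

lemma centralHull_neg_mid : centralHull o p (-q) r = centralHull o p q r := by
  unfold centralHull
  congr 1
  ext y
  simp only [mem_insert_iff, mem_singleton_iff, sub_neg_eq_add, ← sub_eq_add_neg]
  tauto

lemma centralHull_neg_right : centralHull o p q (-r) = centralHull o p q r := by
  unfold centralHull
  congr 1
  ext y
  simp only [mem_insert_iff, mem_singleton_iff, sub_neg_eq_add, ← sub_eq_add_neg]
  tauto

open scoped Pointwise in
lemma add_image_convexHull :
    (fun y => o + y) '' convexHull ℝ ({p, q, r, -p, -q, -r} : Set E) = centralHull o p q r := by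
  change o +ᵥ convexHull ℝ ({p, q, r, -p, -q, -r} : Set E) = _
  rw [← convexHull_vadd]
  simp [centralHull, vadd_set_insert, sub_eq_add_neg]

lemma isCompact_centralHull [TopologicalSpace E] [IsTopologicalAddGroup E] [ContinuousSMul ℝ E] :
    IsCompact (centralHull o p q r) :=
  (Set.toFinite _).isCompact_convexHull ℝ

variable {o p q r}

lemma add_mem_centralHull {a b c : ℝ} (h : |a| + |b| + |c| ≤ 1) :
    o + (a • p + b • q + c • r) ∈ centralHull o p q r := by
  let excess : ℝ := (1 - (|a| + |b| + |c|)) / 2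
  let weight : Fin 6 → ℝ := ![(|a| + a) / 2 + excess, (|b| + b) / 2, (|c| + c) / 2,
    (|a| - a) / 2 + excess, (|b| - b) / 2, (|c| - c) / 2]
  let vertex : Fin 6 → E := ![o + p, o + q, o + r, o - p, o - q, o - r]
  have hweight : ∀ i ∈ Finset.univ, 0 ≤ weight i := fun i _ => by
    have := abs_le.1 (le_refl |a|)
    have := abs_le.1 (le_refl |b|)
    have := abs_le.1 (le_refl |c|)
    fin_cases i <;> simp only [weight, excess, Fin.reduceFinMk, Matrix.cons_val] <;> linarith
  have hsum : ∑ i, weight i = 1 := by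
    simp only [Fin.sum_univ_six, weight, excess, Matrix.cons_val]
    ring
  have hvertex : ∀ i ∈ Finset.univ, vertex i ∈ centralHull o p q r := fun i _ =>
    subset_convexHull ℝ _ (by fin_cases i <;> simp [vertex])
  have hcomb : o + (a • p + b • q + c • r) = ∑ i, weight i • vertex i := by
    simp only [Fin.sum_univ_six, weight, vertex, excess, Matrix.cons_val]
    module
  rw [hcomb]
  exact (convex_convexHull ℝ _).sum_mem hweight hsum hvertex

lemma convex_setOf_exists_abs_le (o p q r : E) :
    Convex ℝ {y | ∃ a b c : ℝ, |a| + |b| + |c| ≤ 1 ∧ y = o + (a • p + b • q + c • r)} := by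
  rintro _ ⟨a, b, c, h, rfl⟩ _ ⟨a', b', c', h', rfl⟩ s t hs ht hst
  refine ⟨s * a + t * a', s * b + t * b', s * c + t * c', ?_, ?_⟩
  · have habs : ∀ e f : ℝ, |s * e + t * f| ≤ s * |e| + t * |f| := fun e f => by
      simpa only [abs_mul, abs_of_nonneg hs, abs_of_nonneg ht] using abs_add_le (s * e) (t * f)
    calc |s * a + t * a'| + |s * b + t * b'| + |s * c + t * c'|
        ≤ s * (|a| + |b| + |c|) + t * (|a'| + |b'| + |c'|) := by
          linarith [habs a a', habs b b', habs c c']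
      _ ≤ s * 1 + t * 1 := by gcongr
      _ = 1 := by rw [mul_one, mul_one, hst]
  · obtain rfl : t = 1 - s := by linarith
    module

lemma mem_centralHull {y : E} : y ∈ centralHull o p q r ↔
    ∃ a b c : ℝ, |a| + |b| + |c| ≤ 1 ∧ y = o + (a • p + b • q + c • r) := by
  constructor
  · refine fun hy => convexHull_min ?_ (convex_setOf_exists_abs_le o p q r) hy
    rintro y (rfl | rfl | rfl | rfl | rfl | rfl)
    exacts [⟨1, 0, 0, by norm_num, by module⟩, ⟨0, 1, 0, by norm_num, by module⟩,
      ⟨0, 0, 1, by norm_num, by module⟩, ⟨-1, 0, 0, by norm_num, by module⟩,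
      ⟨0, -1, 0, by norm_num, by module⟩, ⟨0, 0, -1, by norm_num, by module⟩]
  · rintro ⟨a, b, c, h, rfl⟩
    exact add_mem_centralHull h

lemma sub_mem_centralHull {z : E} (hz : o + z ∈ centralHull o p q r) :
    o - z ∈ centralHull o p q r := by
  obtain ⟨a, b, c, h, hz⟩ := mem_centralHull.1 hz
  refine mem_centralHull.2 ⟨-a, -b, -c, by simpa only [abs_neg] using h, ?_⟩
  rw [add_left_cancel hz]
  module

lemma centralHull_subset {p' q' r' : E} (hp : o + p ∈ centralHull o p' q' r')
    (hq : o + q ∈ centralHull o p' q' r') (hr : o + r ∈ centralHull o p' q' r') :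
    centralHull o p q r ⊆ centralHull o p' q' r' := by
  refine convexHull_min ?_ (convex_convexHull ℝ _)
  rintro y (rfl | rfl | rfl | rfl | rfl | rfl)
  exacts [hp, hq, hr, sub_mem_centralHull hp, sub_mem_centralHull hq, sub_mem_centralHull hr]

lemma interior_eq_empty_of_linearMap_eq [TopologicalSpace E]
    [IsTopologicalAddGroup E] [ContinuousSMul ℝ E] {f : E →ₗ[ℝ] ℝ} (hf : f ≠ 0)
    {S : Set E} {c : ℝ} (h : ∀ y ∈ S, f y = c) : interior S = ∅ := by
  have hopen : IsOpen (f '' interior S) :=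
    f.isOpenMap_of_finiteDimensional (LinearMap.surjective hf) _ isOpen_interior
  have himage : f '' interior S ⊆ {c} := by
    rintro _ ⟨y, hy, rfl⟩
    exact h y (interior_subset hy)
  rw [← image_eq_empty (f := f), ← hopen.interior_eq, ← subset_empty_iff,
    ← interior_singleton c]
  exact interior_mono himage

end CentralHull

section PlanarHexagon

variable {o p q r : E2}

lemma interior_centralHull_nonempty (h : 0 < det2 p r) :
    (interior (centralHull o p q r)).Nonempty := by
  refine ⟨o, mem_interior.2 ⟨{y | |det2 (y - o) r| + |det2 (y - o) p| < det2 p r}, ?_, ?_, ?_⟩⟩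
  · intro y hy
    refine mem_centralHull.2 ⟨det2 (y - o) r / det2 p r, 0, -det2 (y - o) p / det2 p r, ?_, ?_⟩
    · rw [abs_zero, add_zero, abs_div, abs_div, abs_neg, ← add_div, abs_of_pos h, div_le_one h]
      exact (mem_ofPred.1 hy).le
    · rw [← sub_eq_iff_eq_add', ← smul_right_inj h.ne', det2_smul_eq, det2_swap (y - o) p]
      simp only [smul_add, smul_smul, mul_div_cancel₀ _ h.ne', zero_smul, add_zero]
  · exact isOpen_lt (((continuous_det2_sub r o).abs).add (continuous_det2_sub p o).abs)
      continuous_const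
  · simpa [det2] using h

lemma eq_zero_of_det2_eq_zero (h : (interior (centralHull o p q r)).Nonempty) {u : E2}
    (hp : det2 u p = 0) (hq : det2 u q = 0) (hr : det2 u r = 0) : u = 0 := by
  by_contra hu
  let f : E2 →ₗ[ℝ] ℝ := (isLinearMap_det2 u).mk' _
  have hf : f ≠ 0 := fun hf => hu <| by
    have h0 : det2 u !₂[1, 0] = 0 := LinearMap.congr_fun hf _
    have h1 : det2 u !₂[0, 1] = 0 := LinearMap.congr_fun hf _
    ext i
    fin_cases i <;> simp_all [det2]
  have hconst : ∀ y ∈ centralHull o p q r, f y = f o := by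
    intro y hy
    obtain ⟨a, b, c, -, rfl⟩ := mem_centralHull.1 hy
    have : f p = 0 ∧ f q = 0 ∧ f r = 0 := ⟨hp, hq, hr⟩
    simp only [map_add, map_smul, this, smul_zero, add_zero]
  exact h.ne_empty (interior_eq_empty_of_linearMap_eq hf hconst)

lemma exists_det2_ne_zero (h : (interior (centralHull o p q r)).Nonempty) :
    det2 p q ≠ 0 ∨ det2 q r ≠ 0 ∨ det2 p r ≠ 0 := by
  by_contra! hzero
  obtain ⟨hpq, hqr, hpr⟩ := hzero
  have hp : p = 0 := eq_zero_of_det2_eq_zero h (det2_self p) hpq hpr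
  have hq : q = 0 :=
    eq_zero_of_det2_eq_zero h (by rw [det2_swap, hpq, neg_zero]) (det2_self q) hqr
  have hr : r = 0 := eq_zero_of_det2_eq_zero h (by rw [det2_swap, hpr, neg_zero])
    (by rw [det2_swap, hqr, neg_zero]) (det2_self r)
  obtain ⟨u, hu⟩ := exists_ne (0 : E2)
  have hdet : det2 u 0 = 0 := (isLinearMap_det2 u).map_zero
  exact hu (eq_zero_of_det2_eq_zero h (hp ▸ hdet) (hq ▸ hdet) (hr ▸ hdet))

end PlanarHexagon

section ConvexPosition

/-- The points `±p`, `±q`, `±r` bound a convex hexagon in which `p, q, r, -p, -q, -r` is the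
counterclockwise order, `q` lies strictly beyond the diagonal from `p` to `r`, and the angles at
`p` and `r` may be straight. -/
structure ConvexPosition (p q r : E2) : Prop where
  pos : 0 < det2 p r
  mid : det2 p r < det2 p q + det2 q r
  balanced : |det2 p q - det2 q r| ≤ det2 p r

/-- The points `p, q, r, -p, -q, -r` are, in counterclockwise order, the vertices of a convex
hexagon all of whose angles are less than two right angles. -/
structure StrictConvexPosition (p q r : E2) : Prop extends ConvexPosition p q r where
  balanced_lt : |det2 p q - det2 q r| < det2 p r

variable {p q r : E2} (o : E2)

/- If `q` lies in the parallelogram with vertices `±p, ±r`, then it is redundant, and the midpoint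
of a side of the parallelogram serves as a vertex with a straight angle. -/
lemma exists_convexPosition_of_nonneg (hpr : 0 < det2 p r) (hpq : 0 ≤ det2 p q)
    (hqr : 0 ≤ det2 q r) (hpq_le : det2 p q ≤ det2 p r) (hqr_le : det2 q r ≤ det2 p r) :
    ∃ p' q' r', ConvexPosition p' q' r' ∧ centralHull o p' q' r' = centralHull o p q r := by
  rcases lt_or_ge (det2 p r) (det2 p q + det2 q r) with hmid | hmid
  · exact ⟨p, q, r, ⟨hpr, hmid, abs_sub_le_iff.2 ⟨by linarith, by linarith⟩⟩, rfl⟩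
  have hpm : det2 p ((1 / 2 : ℝ) • (r - p)) = det2 p r / 2 := by
    simp only [det2, PiLp.smul_apply, PiLp.sub_apply, smul_eq_mul]
    ring
  have hrm : det2 r ((1 / 2 : ℝ) • (r - p)) = det2 p r / 2 := by
    simp only [det2, PiLp.smul_apply, PiLp.sub_apply, smul_eq_mul]
    ring
  refine ⟨p, r, (1 / 2 : ℝ) • (r - p), ⟨?_, ?_, ?_⟩, subset_antisymm ?_ ?_⟩
  · linarith
  · linarith
  · rw [hpm, hrm, abs_le]
    constructor <;> linarith
  · refine centralHull_subset ?_ ?_ ?_ <;> rw [mem_centralHull]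
    · exact ⟨1, 0, 0, by norm_num, by module⟩
    · exact ⟨0, 0, 1, by norm_num, by module⟩
    · exact ⟨-1 / 2, 0, 1 / 2, by norm_num [abs_div], by module⟩
  · refine centralHull_subset ?_ ?_ ?_ <;> rw [mem_centralHull]
    · exact ⟨1, 0, 0, by norm_num, by module⟩
    · refine ⟨det2 q r / det2 p r, det2 p q / det2 p r, 0, ?_, ?_⟩
      · rw [abs_zero, add_zero, abs_of_nonneg (by positivity), abs_of_nonneg (by positivity),
          ← add_div, div_le_one hpr]
        linarith
      · rw [zero_smul, add_zero, add_right_inj, ← smul_right_inj hpr.ne', det2_smul_eq]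
        simp only [smul_add, smul_smul, mul_div_cancel₀ _ hpr.ne']
    · exact ⟨0, 1, 0, by norm_num, by module⟩

lemma exists_convexPosition_of_abs_le (hpr : det2 p r ≠ 0) (hpq : |det2 p q| ≤ |det2 p r|)
    (hqr : |det2 q r| ≤ |det2 p r|) :
    ∃ p' q' r', ConvexPosition p' q' r' ∧ centralHull o p' q' r' = centralHull o p q r := by
  wlog hpr_pos : 0 < det2 p r generalizing r
  · rw [← centralHull_neg_right]
    refine this ?_ ?_ ?_ ?_ <;>
      simp only [det2_neg_right, abs_neg, neg_ne_zero, neg_pos] <;> try assumption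
    exact lt_of_le_of_ne (not_lt.1 hpr_pos) hpr
  wlog hpq_nonneg : 0 ≤ det2 p q generalizing q
  · rw [← centralHull_neg_mid]
    refine this ?_ ?_ ?_ <;>
      simp only [det2_neg_right, det2_neg_left, abs_neg, neg_nonneg] <;> try assumption
    exact (not_le.1 hpq_nonneg).le
  rw [abs_of_pos hpr_pos] at hpq hqr
  rcases le_total 0 (det2 q r) with hqr_nonneg | hqr_nonpos
  · exact exists_convexPosition_of_nonneg o hpr_pos hpq_nonneg hqr_nonneg (le_of_abs_le hpq)
      (le_of_abs_le hqr)
  · rw [← centralHull_swap, ← centralHull_neg_right]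
    apply exists_convexPosition_of_nonneg <;>
      simp only [det2_neg_right, det2_swap q r, det2_swap p r, det2_swap p q, neg_neg]
    exacts [hpr_pos, neg_nonneg.2 hqr_nonpos, hpq_nonneg, (neg_le_abs _).trans hqr,
      le_of_abs_le hpq]

variable {o} in
lemma exists_convexPosition (h : (interior (centralHull o p q r)).Nonempty) :
    ∃ p' q' r', ConvexPosition p' q' r' ∧ centralHull o p' q' r' = centralHull o p q r := by
  have hne := exists_det2_ne_zero h
  by_cases hpr : |det2 p q| ≤ |det2 p r| ∧ |det2 q r| ≤ |det2 p r|
  · exact exists_convexPosition_of_abs_le o (by grind) hpr.1 hpr.2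
  by_cases hqr : |det2 p q| ≤ |det2 q r| ∧ |det2 p r| ≤ |det2 q r|
  · rw [← centralHull_rotate]
    apply exists_convexPosition_of_abs_le <;>
      simp only [det2_neg_left, det2_swap p r, det2_swap q r, neg_neg] <;> grind
  · rw [← centralHull_rotate, ← centralHull_rotate]
    apply exists_convexPosition_of_abs_le <;>
      simp only [det2_neg_left, det2_neg_right, det2_swap p r, det2_swap p q, neg_neg] <;> grind

lemma det2_eq_zero_of_collinear {P Q R : E2} (h : Collinear ℝ {P, Q, R}) :
    det2 (Q - P) (R - P) = 0 := by
  obtain ⟨u, hu⟩ := (collinear_iff_of_mem (mem_insert P _)).1 h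
  obtain ⟨s, rfl⟩ := hu Q (by simp)
  obtain ⟨t, rfl⟩ := hu R (by simp)
  simp only [det2, PiLp.sub_apply, vadd_eq_add, PiLp.add_apply, PiLp.smul_apply, smul_eq_mul]
  ring

namespace StrictConvexPosition

variable (h : StrictConvexPosition p q r)
include h

lemma pairwise_ne : [o + p, o + q, o + r, o - p, o - q, o - r].Pairwise (· ≠ ·) := by
  obtain ⟨⟨hpr, hmid, -⟩, hbal⟩ := h
  rw [abs_sub_lt_iff] at hbal
  simp only [det2] at hpr hmid hbal
  have hdet : ∀ {x y : E2}, x = y → ∀ u : E2, u 0 * x 1 - u 1 * x 0 = u 0 * y 1 - u 1 * y 0 :=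
    fun hxy u => congrArg (det2 u) hxy
  simp only [List.pairwise_cons, List.mem_cons, List.not_mem_nil, or_false,
    forall_eq_or_imp, forall_eq, ne_eq, IsEmpty.forall_iff, implies_true,
    List.Pairwise.nil, and_true]
  refine ⟨⟨?_, ?_, ?_, ?_, ?_⟩, ⟨?_, ?_, ?_, ?_⟩, ⟨?_, ?_, ?_⟩, ⟨?_, ?_⟩, ?_⟩ <;>
  intro heq <;>
  · have hp := hdet heq p
    have hq := hdet heq q
    have hr := hdet heq r
    simp only [PiLp.add_apply, PiLp.sub_apply] at hp hq hr
    linarith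

lemma nondegenerateHex : NondegenerateHex (o + p) (o + q) (o + r) (o - p) (o - q) (o - r) := by
  refine ⟨h.pairwise_ne o, fun P Q R hP hQ hR hPQ hPR hQR hcol => ?_⟩
  have hdet := det2_eq_zero_of_collinear hcol
  obtain ⟨⟨hpr, hmid, -⟩, hbal⟩ := h
  rw [abs_sub_lt_iff] at hbal
  simp only [det2] at hpr hmid hbal
  rcases hP with rfl | rfl | rfl | rfl | rfl | rfl <;>
  rcases hQ with rfl | rfl | rfl | rfl | rfl | rfl <;>
  first
  | exact absurd rfl hPQ
  | rcases hR with rfl | rfl | rfl | rfl | rfl | rfl <;>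
    first
    | exact absurd rfl hPR
    | exact absurd rfl hQR
    | simp only [det2, PiLp.add_apply, PiLp.sub_apply] at hdet
      linarith

lemma ccwList : CCWList (o + p) (o + q) (o + r) (o - p) (o - q) (o - r) := by
  obtain ⟨⟨hpr, hmid, -⟩, hbal⟩ := h
  rw [abs_sub_lt_iff] at hbal
  simp only [det2] at hpr hmid hbal
  refine ⟨?_, ?_, ?_, ?_, ?_, ?_⟩ <;>
    simp only [det2, PiLp.sub_apply, PiLp.add_apply] <;> linarith

lemma hexWithVertices : HexWithVertices (o + p) (o + q) (o + r) (o - p) (o - q) (o - r)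
    (centralHull o p q r) :=
  ⟨rfl, ⟨o, by module, by module, by module⟩, interior_centralHull_nonempty h.pos⟩

end StrictConvexPosition

end ConvexPosition

section FrameHexagon

/-- The centrally symmetric hexagon with vertices `o ± frame v k (μ - w)`, `o ± frame v ℓ τ`,
`o ± frame v k (μ + w)`. It has two sides or diagonals of length `2 * w` parallel to `v`, at
abscissas `± k`; for `μ = τ = 0` it is symmetric about the line through `o` orthogonal to `v`. -/
def frameHexagon (v o : E2) (k ℓ w μ τ : ℝ) : Set E2 :=
  centralHull o (frame v k (μ - w)) (frame v ℓ τ) (frame v k (μ + w))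

lemma frameHexagon_zero_zero (v o : E2) (k ℓ w : ℝ) : frameHexagon v o k ℓ w 0 0 =
    centralHull o (frame v (-k) (-w)) (frame v k (-w)) (frame v ℓ 0) := by
  rw [frameHexagon, ← centralHull_rotate, frame_neg, zero_sub, zero_add]

lemma exists_eq_frame {p r : E2} (hpr : p ≠ r) (q : E2) :
    ∃ v k ℓ w μ τ, ‖v‖ = 1 ∧ 0 < w ∧
      p = frame v k (μ - w) ∧ q = frame v ℓ τ ∧ r = frame v k (μ + w) := by
  have hd : 0 < ‖r - p‖ := norm_pos_iff.2 (sub_ne_zero.2 hpr.symm)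
  let v : E2 := ‖r - p‖⁻¹ • (r - p)
  have hv : ‖v‖ = 1 := norm_smul_inv_norm (sub_ne_zero.2 hpr.symm)
  have hr : r = p + ‖r - p‖ • v := by
    rw [smul_inv_smul₀ hd.ne', add_sub_cancel]
  refine ⟨v, det2 p v, det2 q v, ‖r - p‖ / 2, ⟪p, v⟫ + ‖r - p‖ / 2, ⟪q, v⟫, hv, half_pos hd, ?_,
    (frame_det2_inner hv q).symm, ?_⟩
  · rw [add_sub_cancel_right, frame_det2_inner hv]
  · rw [add_assoc, add_halves]
    nth_rw 1 [hr, ← frame_det2_inner hv p]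
    unfold frame
    module

/- The last inequality says that `b` lies between `0` and `b'`. -/
lemma exists_minimal_convex_coords_of_nonneg {k ℓ s : ℝ} (hk : 0 < k) (hkℓ : k < ℓ)
    (hs_nonneg : 0 ≤ s) (hs : s ≤ ℓ) :
    ∃ σ b : ℝ, |σ| + |b| ≤ 1 ∧ s = σ * k + b * ℓ ∧
      ∀ σ' b' : ℝ, |σ'| + |b'| ≤ 1 → s = σ' * k + b' * ℓ → |b' - b| ≤ |b'| - |b| := by
  rcases le_or_gt s k with hsk | hks
  · refine ⟨s / k, 0, ?_, ?_, fun σ' b' _ _ => ?_⟩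
    · rwa [abs_zero, add_zero, abs_of_nonneg (by positivity), div_le_one hk]
    · rw [div_mul_cancel₀ _ hk.ne', zero_mul, add_zero]
    · rw [sub_zero, abs_zero, sub_zero]
  · have hkℓ' : 0 < ℓ - k := sub_pos.2 hkℓ
    obtain ⟨b, hb⟩ : ∃ b, b * (ℓ - k) = s - k := ⟨_, div_mul_cancel₀ _ hkℓ'.ne'⟩
    have hb_nonneg : 0 ≤ b := by
      refine nonneg_of_mul_nonneg_left ?_ hkℓ'
      linarith
    have hb_le : b ≤ 1 := by
      refine le_of_mul_le_mul_right ?_ hkℓ'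
      linarith
    refine ⟨1 - b, b, ?_, by linear_combination -hb, fun σ' b' hσb' hs' => ?_⟩
    · rw [abs_of_nonneg hb_nonneg, abs_of_nonneg (sub_nonneg.2 hb_le), sub_add_cancel]
    · have hs_le : s ≤ (1 - |b'|) * k + b' * ℓ := by
        rw [hs']
        gcongr
        linarith [le_abs_self σ']
      have hb'_nonneg : 0 ≤ b' := by
        by_contra! hb'
        rw [abs_of_neg hb'] at hs_le
        nlinarith
      rw [abs_of_nonneg hb'_nonneg] at hs_le ⊢
      have hb_le_b' : b ≤ b' := by
        refine le_of_mul_le_mul_right ?_ hkℓ'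
        linarith
      rw [abs_of_nonneg (sub_nonneg.2 hb_le_b'), abs_of_nonneg hb_nonneg]

lemma exists_minimal_convex_coords {k ℓ s : ℝ} (hk : 0 < k) (hkℓ : k < ℓ) (hs : |s| ≤ ℓ) :
    ∃ σ b : ℝ, |σ| + |b| ≤ 1 ∧ s = σ * k + b * ℓ ∧
      ∀ σ' b' : ℝ, |σ'| + |b'| ≤ 1 → s = σ' * k + b' * ℓ → |b' - b| ≤ |b'| - |b| := by
  rcases le_total 0 s with hs_nonneg | hs_nonpos
  · exact exists_minimal_convex_coords_of_nonneg hk hkℓ hs_nonneg (le_of_abs_le hs)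
  · obtain ⟨σ, b, hσb, hs_eq, hmin⟩ := exists_minimal_convex_coords_of_nonneg hk hkℓ
      (neg_nonneg.2 hs_nonpos) ((neg_le_abs s).trans hs)
    refine ⟨-σ, -b, by rwa [abs_neg, abs_neg], by linarith, fun σ' b' hσb' hs' => ?_⟩
    have := hmin (-σ') (-b') (by rwa [abs_neg, abs_neg]) (by linarith)
    rwa [← neg_add', abs_neg, abs_neg, ← abs_neg b, ← sub_neg_eq_add] at this

variable {v : E2} (hv : ‖v‖ = 1) {o : E2} {k ℓ w μ τ s t : ℝ}
include hv

lemma add_frame_mem_frameHexagon : o + frame v s t ∈ frameHexagon v o k ℓ w μ τ ↔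
    ∃ σ b δ : ℝ, |σ| + |b| ≤ 1 ∧ |δ| + |b| ≤ 1 ∧
      s = σ * k + b * ℓ ∧ t = σ * μ + b * τ + δ * w := by
  simp only [frameHexagon, mem_centralHull, frame_smul, frame_add, add_right_inj, frame_inj hv]
  constructor
  · rintro ⟨a, b, c, habc, rfl, rfl⟩
    refine ⟨a + c, b, c - a, ?_, ?_, by ring, by ring⟩
    · linarith [abs_add_le a c]
    · linarith [abs_sub c a]
  · rintro ⟨σ, b, δ, hσ, hδ, rfl, rfl⟩
    refine ⟨(σ - δ) / 2, b, (σ + δ) / 2, ?_, by ring, by ring⟩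
    cases abs_cases σ <;> cases abs_cases δ <;> cases abs_cases ((σ - δ) / 2) <;>
      cases abs_cases ((σ + δ) / 2) <;> linarith

lemma slice_frameHexagon_eq_empty (hk : 0 ≤ k) (hkℓ : k ≤ ℓ) (hs : ℓ < |s|) :
    slice v o (frameHexagon v o k ℓ w μ τ) s = ∅ := by
  refine eq_empty_of_forall_notMem fun t ht => hs.not_ge ?_
  obtain ⟨σ, b, δ, hσ, -, rfl, -⟩ := (add_frame_mem_frameHexagon hv).1 ht
  have hℓ : 0 ≤ ℓ := hk.trans hkℓ
  calc |σ * k + b * ℓ| ≤ |σ * k| + |b * ℓ| := abs_add_le _ _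
    _ = |σ| * k + |b| * ℓ := by rw [abs_mul, abs_mul, abs_of_nonneg hk, abs_of_nonneg hℓ]
    _ ≤ |σ| * ℓ + |b| * ℓ := by gcongr
    _ ≤ ℓ := by rw [← add_mul]; exact mul_le_of_le_one_left hℓ hσ

/- The coordinates `σ`, `b` do not depend on `μ` and `τ`: all hexagons with the same `k`, `ℓ`, `w`
have slices of the same lengths. -/
lemma exists_slice_frameHexagon_eq_closedBall (hk : 0 < k) (hkℓ : k < ℓ) (hw : 0 < w)
    (hs : |s| ≤ ℓ) :
    ∃ σ b : ℝ, |b| ≤ 1 ∧ ∀ μ τ, |k * τ - ℓ * μ| ≤ k * w →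
      slice v o (frameHexagon v o k ℓ w μ τ) s = closedBall (σ * μ + b * τ) ((1 - |b|) * w) := by
  obtain ⟨σ, b, hσb, hs_eq, hmin⟩ := exists_minimal_convex_coords hk hkℓ hs
  refine ⟨σ, b, by linarith [abs_nonneg σ], fun μ τ hμτ => ?_⟩
  ext t
  rw [mem_closedBall, Real.dist_eq]
  refine (add_frame_mem_frameHexagon hv).trans ⟨?_, fun ht => ?_⟩
  · rintro ⟨σ', b', δ, hσb', hδ, hs', rfl⟩
    have hkey : k * (σ' * μ + b' * τ + δ * w - (σ * μ + b * τ)) =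
        (b' - b) * (k * τ - ℓ * μ) + k * w * δ := by
      linear_combination μ * (hs_eq - hs')
    have hkw : 0 < k * w := by positivity
    refine le_of_mul_le_mul_left ?_ hk
    calc k * |σ' * μ + b' * τ + δ * w - (σ * μ + b * τ)|
        = |(b' - b) * (k * τ - ℓ * μ) + k * w * δ| := by rw [← hkey, abs_mul, abs_of_pos hk]
      _ ≤ |b' - b| * |k * τ - ℓ * μ| + k * w * |δ| := by
          refine (abs_add_le _ _).trans_eq ?_
          rw [abs_mul, abs_mul (k * w), abs_of_pos hkw]
      _ ≤ (|b'| - |b|) * (k * w) + k * w * (1 - |b'|) := by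
          gcongr
          · exact (abs_nonneg _).trans (hmin σ' b' hσb' hs')
          · exact hmin σ' b' hσb' hs'
          · linarith
      _ = k * ((1 - |b|) * w) := by ring
  · refine ⟨σ, b, (t - (σ * μ + b * τ)) / w, hσb, ?_, hs_eq, ?_⟩
    · rw [abs_div, abs_of_pos hw, ← le_sub_iff_add_le, div_le_iff₀ hw]
      exact ht
    · rw [div_mul_cancel₀ _ hw.ne', add_sub_cancel]

theorem steiner_frameHexagon (hk : 0 < k) (hkℓ : k < ℓ) (hw : 0 < w)
    (hμτ : |k * τ - ℓ * μ| ≤ k * w) :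
    steiner v ⟪o, v⟫ (frameHexagon v o k ℓ w μ τ) = frameHexagon v o k ℓ w 0 0 := by
  refine eq_of_slice_eq hv o fun s => ?_
  rcases lt_or_ge ℓ |s| with hs | hs
  · rw [slice_frameHexagon_eq_empty hv hk.le hkℓ.le hs]
    exact slice_steiner_of_eq_empty hv o (slice_frameHexagon_eq_empty hv hk.le hkℓ.le hs)
  · obtain ⟨σ, b, hb, hslice⟩ := exists_slice_frameHexagon_eq_closedBall hv (o := o) hk hkℓ hw hs
    have hρ : 0 ≤ (1 - |b|) * w := mul_nonneg (sub_nonneg.2 hb) hw.le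
    rw [slice_steiner_of_eq_closedBall hv o hρ (hslice μ τ hμτ), hslice 0 0 ?_]
    · simp only [mul_zero, add_zero]
    · rw [mul_zero, mul_zero, sub_zero, abs_zero]
      positivity

lemma convexPosition_frame_iff (hw : 0 < w) :
    ConvexPosition (frame v k (μ - w)) (frame v ℓ τ) (frame v k (μ + w)) ↔
      0 < k ∧ k < ℓ ∧ |k * τ - ℓ * μ| ≤ k * w := by
  have hpr : det2 (frame v k (μ - w)) (frame v k (μ + w)) = 2 * (k * w) := by
    rw [det2_frame hv]
    ring
  have hsum : det2 (frame v k (μ - w)) (frame v ℓ τ) + det2 (frame v ℓ τ) (frame v k (μ + w)) =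
      2 * (ℓ * w) := by
    rw [det2_frame hv, det2_frame hv]
    ring
  have hdiff : det2 (frame v k (μ - w)) (frame v ℓ τ) - det2 (frame v ℓ τ) (frame v k (μ + w)) =
      2 * (k * τ - ℓ * μ) := by
    rw [det2_frame hv, det2_frame hv]
    ring
  have hiff : ConvexPosition (frame v k (μ - w)) (frame v ℓ τ) (frame v k (μ + w)) ↔
      0 < 2 * (k * w) ∧ 2 * (k * w) < 2 * (ℓ * w) ∧ |2 * (k * τ - ℓ * μ)| ≤ 2 * (k * w) := by
    rw [← hpr, ← hsum, ← hdiff]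
    exact ⟨fun h => ⟨h.pos, h.mid, h.balanced⟩, fun h => ⟨h.1, h.2.1, h.2.2⟩⟩
  rw [hiff, abs_mul, abs_two, mul_le_mul_iff_right₀ two_pos, mul_lt_mul_iff_right₀ two_pos,
    mul_lt_mul_iff_left₀ hw, mul_pos_iff_of_pos_left two_pos, mul_pos_iff_of_pos_right hw]

lemma strictConvexPosition_frame (hk : 0 < k) (hkℓ : k < ℓ) (hw : 0 < w) :
    StrictConvexPosition (frame v (-k) (-w)) (frame v k (-w)) (frame v ℓ 0) := by
  have hkw : 0 < k * w := mul_pos hk hw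
  have hkℓw : k * w < ℓ * w := mul_lt_mul_of_pos_right hkℓ hw
  have hbal : |det2 (frame v (-k) (-w)) (frame v k (-w)) - det2 (frame v k (-w)) (frame v ℓ 0)| <
      det2 (frame v (-k) (-w)) (frame v ℓ 0) := by
    simp only [det2_frame hv]
    exact abs_sub_lt_iff.2 ⟨by linarith, by linarith⟩
  refine ⟨⟨?_, ?_, hbal.le⟩, hbal⟩ <;> simp only [det2_frame hv] <;> linarith

end FrameHexagon

section Symmetrization

/-- The hexagon with centre `o` and vertices `±p', ±q', ±r'` is obtained from the one with vertices
`±p, ±q, ±r` by Steiner symmetrization in the direction `v`; it has two sides of length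
`‖q' - p'‖` and four sides of length `‖r' - q'‖`, which are bounded in terms of the original
sides. -/
structure IsHexSymmetrization (o v p q r p' q' r' : E2) : Prop where
  norm_eq_one : ‖v‖ = 1
  strictConvexPosition : StrictConvexPosition p' q' r'
  steiner_eq : steiner v ⟪o, v⟫ (centralHull o p q r) = centralHull o p' q' r'
  norm_add_eq : ‖p' + r'‖ = ‖r' - q'‖
  norm_sub_le : ‖q' - p'‖ ≤ ‖p + r‖
  two_mul_norm_sub_le : 2 * ‖r' - q'‖ ≤ ‖q - p‖ + ‖r - q‖

theorem ConvexPosition.exists_isHexSymmetrization {p q r : E2} (h : ConvexPosition p q r) (o : E2) :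
    ∃ v p' q' r', IsHexSymmetrization o v p q r p' q' r' := by
  have hpr : p ≠ r := by
    rintro rfl
    exact h.pos.ne' (det2_self p)
  obtain ⟨v, k, ℓ, w, μ, τ, hv, hw, rfl, rfl, rfl⟩ := exists_eq_frame hpr q
  obtain ⟨hk, hkℓ, hμτ⟩ := (convexPosition_frame_iff hv hw).1 h
  refine ⟨v, frame v (-k) (-w), frame v k (-w), frame v ℓ 0, hv,
    strictConvexPosition_frame hv hk hkℓ hw, ?_, ?_, ?_, ?_⟩
  · rw [← frameHexagon_zero_zero v o]
    exact steiner_frameHexagon hv hk hkℓ hw hμτ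
  · simp only [frame_add, frame_sub, norm_frame hv]
    ring_nf
  · simp only [frame_add, frame_sub, norm_frame hv]
    apply Real.sqrt_le_sqrt
    nlinarith [sq_nonneg μ]
  · have hreflect : ‖frame v k (μ + w) - frame v ℓ τ‖ = ‖frame v (ℓ - k) (μ + w - τ)‖ := by
      rw [frame_sub, norm_frame hv, norm_frame hv, ← neg_sub ℓ k, neg_sq]
    calc 2 * ‖frame v ℓ 0 - frame v k (-w)‖
        = ‖(2 : ℝ) • (frame v ℓ 0 - frame v k (-w))‖ := by rw [norm_smul, Real.norm_two]
      _ = ‖frame v ℓ τ - frame v k (μ - w) + frame v (ℓ - k) (μ + w - τ)‖ := by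
          simp only [frame_sub, frame_add, frame_smul]
          ring_nf
      _ ≤ ‖frame v ℓ τ - frame v k (μ - w)‖ + ‖frame v k (μ + w) - frame v ℓ τ‖ := by
          rw [hreflect]
          exact norm_add_le _ _

lemma IsHexSymmetrization.volume_eq {o v p q r p' q' r' : E2}
    (h : IsHexSymmetrization o v p q r p' q' r') :
    volume (centralHull o p' q' r') = volume (centralHull o p q r) := by
  rw [← h.steiner_eq, volume_steiner h.norm_eq_one _ (isCompact_centralHull o p q r)]

lemma IsHexSymmetrization.exists_vertices {o v p q r p' q' r' : E2}
    (h : IsHexSymmetrization o v p q r p' q' r') :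
    0 < ‖r' - q'‖ ∧ 0 < ‖q' - p'‖ ∧ ∃ A B C D E F : E2,
      HexWithVertices A B C D E F (centralHull o p' q' r') ∧ CCWList A B C D E F ∧
      NondegenerateHex A B C D E F ∧ dist A B = ‖q' - p'‖ ∧ dist D E = ‖q' - p'‖ ∧
      dist B C = ‖r' - q'‖ ∧ dist C D = ‖r' - q'‖ ∧ dist E F = ‖r' - q'‖ ∧
      dist F A = ‖r' - q'‖ := by
  have hconv := h.strictConvexPosition
  refine ⟨norm_pos_iff.2 (sub_ne_zero.2 ?_), norm_pos_iff.2 (sub_ne_zero.2 ?_), o + p', o + q',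
    o + r', o - p', o - q', o - r', hconv.hexWithVertices o, hconv.ccwList o,
    hconv.nondegenerateHex o, ?_, ?_, ?_, ?_, ?_, ?_⟩
  · rintro rfl
    have := hconv.mid
    rw [det2_self, add_zero] at this
    exact this.false
  · rintro rfl
    have := hconv.mid
    rw [det2_self, zero_add] at this
    exact this.false
  · rw [dist_add_left, dist_eq_norm, norm_sub_rev]
  · rw [dist_sub_left, dist_eq_norm, norm_sub_rev]
  · rw [dist_add_left, dist_eq_norm, norm_sub_rev]
  · rw [dist_eq_norm, ← h.norm_add_eq]
    congr 1
    abel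
  · rw [dist_sub_left, dist_eq_norm, norm_sub_rev]
  · rw [dist_comm, dist_eq_norm, ← h.norm_add_eq]
    congr 1
    abel

lemma ConvexPosition.exists_seq_isHexSymmetrization {p₀ q₀ r₀ : E2} (h : ConvexPosition p₀ q₀ r₀)
    (o : E2) : ∃ v p q r : ℕ → E2, p 0 = p₀ ∧ q 0 = q₀ ∧ r 0 = r₀ ∧
      ∀ n, IsHexSymmetrization o (v n) (p n) (q n) (r n) (p (n + 1)) (q (n + 1)) (r (n + 1)) := by
  choose v p' q' r' hsymm using fun T : {T : E2 × E2 × E2 // ConvexPosition T.1 T.2.1 T.2.2} =>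
    T.2.exists_isHexSymmetrization o
  let next (T : {T : E2 × E2 × E2 // ConvexPosition T.1 T.2.1 T.2.2}) :
      {T : E2 × E2 × E2 // ConvexPosition T.1 T.2.1 T.2.2} :=
    ⟨(p' T, q' T, r' T), (hsymm T).strictConvexPosition.toConvexPosition⟩
  let T (n : ℕ) := next^[n] ⟨(p₀, q₀, r₀), h⟩
  refine ⟨fun n => v (T n), fun n => (T n).1.1, fun n => (T n).1.2.1, fun n => (T n).1.2.2,
    rfl, rfl, rfl, fun n => ?_⟩
  have hT : T (n + 1) = next (T n) := Function.iterate_succ_apply' next n _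
  simp only [hT]
  exact hsymm (T n)

end Symmetrization

/-- Iterated Steiner symmetrizations of any `H₀ ∈ 𝓗` produce a sequence
of nondegenerate centrally symmetric hexagons of constant area, having two opposite sides
of length `b n` and four sides of length `a n`, with `4a_{n+1} + 2b_{n+1} ≤ 4a_n + 2b_n`,
`2a_{n+1} ≤ a_n + b_n` and `b_{n+1} ≤ a_n`. -/
theorem statement4 (H₀ : Set E2) (hH₀ : Hex H₀) :
    ∃ (v : ℕ → E2) (c : ℕ → ℝ) (H : ℕ → Set E2) (a b : ℕ → ℝ),
      (∀ n, ‖v n‖ = 1) ∧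
      H 0 = H₀ ∧
      (∀ n, H (n + 1) = steiner (v n) (c n) (H n)) ∧
      (∀ n, 1 ≤ n → volume (H n) = volume H₀) ∧
      (∀ n, 1 ≤ n → 0 < a n ∧ 0 < b n ∧
        ∃ A B C D E F : E2,
          HexWithVertices A B C D E F (H n) ∧ CCWList A B C D E F ∧
          NondegenerateHex A B C D E F ∧
          dist A B = b n ∧ dist D E = b n ∧
          dist B C = a n ∧ dist C D = a n ∧ dist E F = a n ∧ dist F A = a n) ∧
      (∀ n, 1 ≤ n →
        4 * a (n + 1) + 2 * b (n + 1) ≤ 4 * a n + 2 * b n ∧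
        2 * a (n + 1) ≤ a n + b n ∧
        b (n + 1) ≤ a n) := by
  obtain ⟨⟨o, p₀, q₀, r₀, rfl⟩, hint⟩ := hH₀
  rw [add_image_convexHull] at hint ⊢
  obtain ⟨p₁, q₁, r₁, hconv, hhull⟩ := exists_convexPosition hint
  obtain ⟨v, p, q, r, rfl, rfl, rfl, hsymm⟩ := hconv.exists_seq_isHexSymmetrization o
  have hvol (n : ℕ) : volume (centralHull o (p n) (q n) (r n)) =
      volume (centralHull o (p 0) (q 0) (r 0)) := by
    induction n with
    | zero => rfl
    | succ n ih => exact (hsymm n).volume_eq.trans ih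
  refine ⟨v, fun n => ⟪o, v n⟫, fun n => centralHull o (p n) (q n) (r n),
    fun n => ‖r n - q n‖, fun n => ‖q n - p n‖, fun n => (hsymm n).norm_eq_one, hhull,
    fun n => (hsymm n).steiner_eq.symm, fun n _ => hhull ▸ hvol n, fun n hn => ?_, fun n hn => ?_⟩
  all_goals obtain ⟨m, rfl⟩ := Nat.exists_eq_add_of_le' hn
  · exact (hsymm m).exists_vertices
  · have hb := (hsymm (m + 1)).norm_sub_le.trans_eq (hsymm m).norm_add_eq
    have ha := (hsymm (m + 1)).two_mul_norm_sub_le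
    exact ⟨by linarith, by linarith, hb⟩
end
end

section
/- Let (a_n)_{n≥1} and (b_n)_{n≥1} be sequences of positive real numbers satisfying 2a_{n+1} ≤ a_n + b_n and b_{n+1} ≤ a_n for every n ≥ 1, and set c = inf_{n≥1} max(a_n, b_n). Then both sequences converge and lim_n a_n = lim_n b_n = c; equivalently, lim_n min(a_n, b_n) = lim_n max(a_n, b_n) = c. -/
open Filter
open scoped Topology

/-!
Let `Mₙ = max (aₙ, bₙ)`. Both recursions bound the new terms by an average of `aₙ` and `Mₙ`, so `M`
decreases to its infimum `c`. The same average must still be at least `c ≤ Mₙ₊₁`, and since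
`Mₙ → c` this forces `aₙ` up to `c`. The recursion for `a` then bounds `bₙ` below by a combination
of `aₙ₊₁` and `aₙ` that tends to `c`.
-/

section WeightedAverage

variable {𝕜 : Type*} [Field 𝕜] [LinearOrder 𝕜] [IsStrictOrderedRing 𝕜] {x y : ℕ → 𝕜} {s t c : 𝕜}

theorem max_succ_le_weighted_average (ht : 0 ≤ t) (hst : s + t = 1)
    (hx : ∀ n, x (n + 1) ≤ s * x n + t * y n) (hy : ∀ n, y (n + 1) ≤ x n) (n : ℕ) :
    max (x (n + 1)) (y (n + 1)) ≤ s * x n + t * max (x n) (y n) := by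
  refine max_le ?_ ?_
  · calc x (n + 1) ≤ s * x n + t * y n := hx n
      _ ≤ s * x n + t * max (x n) (y n) := by gcongr; exact le_max_right _ _
  · calc y (n + 1) ≤ x n := hy n
      _ = s * x n + t * x n := by rw [← add_mul, hst, one_mul]
      _ ≤ s * x n + t * max (x n) (y n) := by gcongr; exact le_max_left _ _

theorem antitone_max_of_le_weighted_average (hs : 0 ≤ s) (ht : 0 ≤ t) (hst : s + t = 1)
    (hx : ∀ n, x (n + 1) ≤ s * x n + t * y n) (hy : ∀ n, y (n + 1) ≤ x n) :
    Antitone fun n => max (x n) (y n) :=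
  antitone_nat_of_succ_le fun n =>
    calc max (x (n + 1)) (y (n + 1)) ≤ s * x n + t * max (x n) (y n) :=
          max_succ_le_weighted_average ht hst hx hy n
      _ ≤ s * max (x n) (y n) + t * max (x n) (y n) := by gcongr; exact le_max_left _ _
      _ = max (x n) (y n) := by rw [← add_mul, hst, one_mul]

variable [TopologicalSpace 𝕜] [OrderTopology 𝕜]

theorem tendsto_left_of_isGLB_range_max (hs : 0 < s) (ht : 0 ≤ t) (hst : s + t = 1)
    (hx : ∀ n, x (n + 1) ≤ s * x n + t * y n) (hy : ∀ n, y (n + 1) ≤ x n)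
    (hc : IsGLB (Set.range fun n => max (x n) (y n)) c) : Tendsto x atTop (𝓝 c) := by
  have hmax : Tendsto (fun n => max (x n) (y n)) atTop (𝓝 c) :=
    tendsto_atTop_isGLB (antitone_max_of_le_weighted_average hs.le ht hst hx hy) hc
  have hlower : Tendsto (fun n => (c - t * max (x n) (y n)) / s) atTop (𝓝 c) := by
    have hlimit : (c - t * c) / s = c := by
      rw [div_eq_iff hs.ne']
      linear_combination -c * hst
    simpa only [hlimit] using ((hmax.const_mul t).const_sub c).div_const s
  refine tendsto_of_tendsto_of_tendsto_of_le_of_le hlower hmax (fun n => ?_)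
    fun n => le_max_left _ _
  have hc_le : c ≤ s * x n + t * max (x n) (y n) :=
    (hc.1 ⟨n + 1, rfl⟩).trans (max_succ_le_weighted_average ht hst hx hy n)
  rw [div_le_iff₀' hs]
  exact sub_le_iff_le_add.2 hc_le

theorem tendsto_right_of_tendsto_left (ht : 0 < t) (hst : s + t = 1)
    (hx : ∀ n, x (n + 1) ≤ s * x n + t * y n) (hy : ∀ n, y (n + 1) ≤ x n)
    (hlim : Tendsto x atTop (𝓝 c)) : Tendsto y atTop (𝓝 c) := by
  have hx_shift : Tendsto (fun n => x (n + 1)) atTop (𝓝 c) := (tendsto_add_atTop_iff_nat 1).2 hlim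
  have hlower : Tendsto (fun n => (x (n + 1) - s * x n) / t) atTop (𝓝 c) := by
    have hlimit : (c - s * c) / t = c := by
      rw [div_eq_iff ht.ne']
      linear_combination -c * hst
    simpa only [hlimit] using (hx_shift.sub (hlim.const_mul s)).div_const t
  have hlower_le (n : ℕ) : (x (n + 1) - s * x n) / t ≤ y n := by
    rw [div_le_iff₀' ht]
    exact sub_le_iff_le_add'.2 (hx n)
  rw [← tendsto_add_atTop_iff_nat 1]
  exact tendsto_of_tendsto_of_tendsto_of_le_of_le ((tendsto_add_atTop_iff_nat 1).2 hlower) hlim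
    (fun n => hlower_le (n + 1)) hy

theorem statement6_general (a b : ℕ → 𝕜) (hs : 0 < s) (ht : 0 < t) (hst : s + t = 1)
    (ha : ∀ n, 1 ≤ n → a (n + 1) ≤ s * a n + t * b n) (hb : ∀ n, 1 ≤ n → b (n + 1) ≤ a n)
    (hc : IsGLB (Set.range fun n => max (a (n + 1)) (b (n + 1))) c) :
    Tendsto a atTop (𝓝 c) ∧ Tendsto b atTop (𝓝 c) ∧
    Tendsto (fun n => min (a n) (b n)) atTop (𝓝 c) ∧
    Tendsto (fun n => max (a n) (b n)) atTop (𝓝 c) := by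
  have ha_succ (n : ℕ) : a (n + 1 + 1) ≤ s * a (n + 1) + t * b (n + 1) := ha (n + 1) n.succ_pos
  have hb_succ (n : ℕ) : b (n + 1 + 1) ≤ a (n + 1) := hb (n + 1) n.succ_pos
  have ha_shift : Tendsto (fun n => a (n + 1)) atTop (𝓝 c) :=
    tendsto_left_of_isGLB_range_max hs ht.le hst ha_succ hb_succ hc
  have hb_shift : Tendsto (fun n => b (n + 1)) atTop (𝓝 c) :=
    tendsto_right_of_tendsto_left ht hst ha_succ hb_succ ha_shift
  have ha_lim : Tendsto a atTop (𝓝 c) := (tendsto_add_atTop_iff_nat 1).1 ha_shift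
  have hb_lim : Tendsto b atTop (𝓝 c) := (tendsto_add_atTop_iff_nat 1).1 hb_shift
  exact ⟨ha_lim, hb_lim, by simpa only [min_self] using ha_lim.min hb_lim,
    by simpa only [max_self] using ha_lim.max hb_lim⟩

end WeightedAverage

/-- If `a_n, b_n > 0` satisfy `2a_{n+1} ≤ a_n + b_n` and `b_{n+1} ≤ a_n`
for every `n ≥ 1`, and `c = inf_{n ≥ 1} max (a_n, b_n)`, then
`lim a_n = lim b_n = lim min (a_n, b_n) = lim max (a_n, b_n) = c`. -/
theorem statement6 (a b : ℕ → ℝ)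
    (ha : ∀ n, 1 ≤ n → 0 < a n) (hb : ∀ n, 1 ≤ n → 0 < b n)
    (h1 : ∀ n, 1 ≤ n → 2 * a (n + 1) ≤ a n + b n)
    (h2 : ∀ n, 1 ≤ n → b (n + 1) ≤ a n)
    (c : ℝ) (hc : c = ⨅ n : ℕ, max (a (n + 1)) (b (n + 1))) :
    Tendsto a atTop (𝓝 c) ∧ Tendsto b atTop (𝓝 c) ∧
    Tendsto (fun n => min (a n) (b n)) atTop (𝓝 c) ∧
    Tendsto (fun n => max (a n) (b n)) atTop (𝓝 c) := by
  have hbdd : BddBelow (Set.range fun n => max (a (n + 1)) (b (n + 1))) :=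
    ⟨0, Set.forall_mem_range.2 fun n => le_max_of_le_left (ha (n + 1) n.succ_pos).le⟩
  exact statement6_general a b one_half_pos one_half_pos (add_halves 1)
    (fun n hn => by linarith [h1 n hn]) h2 (hc ▸ isGLB_ciInf hbdd)
end

section
/- Let (a_n)_{n≥1} and (b_n)_{n≥1} be sequences of positive real numbers satisfying 2a_{n+1} ≤ a_n + b_n and b_{n+1} ≤ a_n for every n ≥ 1. Set c_n = max(a_n, b_n), d_n = min(a_n, b_n) and c = inf_{n≥1} c_n. Let ε > 0 and let n ≥ 1 be such that c_k ≤ c + ε for all k ≥ n. Then max(d_n, d_{n+1}) ≥ c − ε. -/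
/-!
If `2c ≤ a_n + b_n`, then `max (a_n, b_n) ≤ c + ε` forces `min (a_n, b_n) ≥ c - ε`. Otherwise
`a_{n+1} < c`, hence `b_{n+2} < c`; since `c ≤ max (a_{n+2}, b_{n+2})` this leaves `c ≤ a_{n+2}`,
so `2c ≤ a_{n+1} + b_{n+1}` and the first case applies at `n + 1`.
-/

theorem two_nsmul_le_add_or_two_nsmul_le_add {α : Type*} [AddCommMonoid α] [LinearOrder α]
    [IsOrderedAddMonoid α] {a₀ b₀ a₁ b₁ a₂ b₂ c : α} (ha₁ : 2 • a₁ ≤ a₀ + b₀)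
    (ha₂ : 2 • a₂ ≤ a₁ + b₁) (hb₂ : b₂ ≤ a₁) (hc : c ≤ max a₂ b₂) :
    2 • c ≤ a₀ + b₀ ∨ 2 • c ≤ a₁ + b₁ := by
  refine or_iff_not_imp_left.mpr fun h ↦ ?_
  have ha₁c : a₁ < c := lt_of_nsmul_lt_nsmul_right 2 (ha₁.trans_lt (not_le.mp h))
  have hca₂ : c ≤ a₂ := (le_max_iff.mp hc).resolve_right (hb₂.trans_lt ha₁c).not_ge
  exact (nsmul_le_nsmul_right hca₂ 2).trans ha₂

section OrderedGroup

variable {α : Type*} [AddCommGroup α] [LinearOrder α] [IsOrderedAddMonoid α]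

theorem sub_le_min_of_two_nsmul_le_add {a b c ε : α} (hsum : 2 • c ≤ a + b)
    (hmax : max a b ≤ c + ε) : c - ε ≤ min a b :=
  calc
    c - ε = 2 • c - (c + ε) := by abel
    _ ≤ a + b - max a b := sub_le_sub hsum hmax
    _ = min a b := sub_eq_of_eq_add (min_add_max a b).symm

theorem statement7_general {a₀ b₀ a₁ b₁ a₂ b₂ c ε : α} (ha₁ : 2 • a₁ ≤ a₀ + b₀)
    (ha₂ : 2 • a₂ ≤ a₁ + b₁) (hb₂ : b₂ ≤ a₁) (hc : c ≤ max a₂ b₂)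
    (hmax₀ : max a₀ b₀ ≤ c + ε) (hmax₁ : max a₁ b₁ ≤ c + ε) :
    c - ε ≤ max (min a₀ b₀) (min a₁ b₁) :=
  le_max_iff.mpr <| (two_nsmul_le_add_or_two_nsmul_le_add ha₁ ha₂ hb₂ hc).imp
    (sub_le_min_of_two_nsmul_le_add · hmax₀) (sub_le_min_of_two_nsmul_le_add · hmax₁)

end OrderedGroup

/-- If `a_n, b_n > 0` satisfy `2a_{n+1} ≤ a_n + b_n` and `b_{n+1} ≤ a_n`
for every `n ≥ 1`, `c = inf_{n ≥ 1} max (a_n, b_n)`, `ε > 0`, and `n ≥ 1` is such that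
`max (a_k, b_k) ≤ c + ε` for all `k ≥ n`, then `max (d_n, d_{n+1}) ≥ c − ε`, where
`d_k = min (a_k, b_k)`. -/
theorem statement7 (a b : ℕ → ℝ)
    (ha : ∀ n, 1 ≤ n → 0 < a n) (hb : ∀ n, 1 ≤ n → 0 < b n)
    (h1 : ∀ n, 1 ≤ n → 2 * a (n + 1) ≤ a n + b n)
    (h2 : ∀ n, 1 ≤ n → b (n + 1) ≤ a n)
    (c : ℝ) (hc : c = ⨅ n : ℕ, max (a (n + 1)) (b (n + 1)))
    (ε : ℝ) (hε : 0 < ε)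
    (n : ℕ) (hn : 1 ≤ n)
    (hcn : ∀ k, n ≤ k → max (a k) (b k) ≤ c + ε) :
    c - ε ≤ max (min (a n) (b n)) (min (a (n + 1)) (b (n + 1))) := by
  have hc_le : c ≤ max (a (n + 2)) (b (n + 2)) :=
    hc.trans_le <| ciInf_le ⟨0, Set.forall_mem_range.mpr fun k ↦
      le_max_of_le_left (ha (k + 1) k.succ_pos).le⟩ (n + 1)
  exact statement7_general (by simpa using h1 n hn) (by simpa using h1 (n + 1) n.succ_pos)
    (h2 (n + 1) n.succ_pos) hc_le (hcn n le_rfl) (hcn (n + 1) n.le_succ)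
end

section
/- Let s > 0 and let H ⊆ ℝ² be a centrally symmetric convex hexagon with six distinct vertices, all six of whose sides have length s, and whose Lebesgue area equals (3√3/2)·s². Then H is a regular hexagon (with side length s). -/
open MeasureTheory Metric Filter Real Set
open scoped Topology ENNReal NNReal RealInnerProductSpace

noncomputable section

/-!
Write `u`, `v`, `w` for three consecutive side vectors. The hexagon lies in the zonogon spanned by
them, whose area is at most `|u × v| + |v × w| + |u × w|`: sliding a point of the unit cube along
the kernel of `(a, b, c) ↦ a u + b v + c w` until it leaves the cube covers the zonogon by three
parallelograms. Let `x, y, z` be the cosines of the angles between `u, v, w`. Since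
`|u × v| ^ 2 = s ^ 4 * (1 - x ^ 2)`, the area assumption and the quadratic-arithmetic mean
inequality give `x ^ 2 + y ^ 2 + z ^ 2 ≤ 3 / 4`, while the vanishing Gram determinant
`1 + 2 x y z - x ^ 2 - y ^ 2 - z ^ 2` forces the opposite inequality, with equality only if some
signed sum `± u ± v ± w` vanishes. One choice of signs makes the hexagon regular. Each of the other
three puts a vertex at the center, so that the hexagon collapses to a parallelogram of area at most
`2 s ^ 2`, which is too small.
-/

open scoped Pointwise

section Zonotope

variable {E : Type*} {n : ℕ}

theorem sum_mem_parallelepiped {ι : Type*} [Fintype ι] [AddCommGroup E] [Module ℝ E]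
    (v : ι → E) (S : Finset ι) : ∑ i ∈ S, v i ∈ parallelepiped v := by
  classical
  refine (mem_parallelepiped_iff _ _).2 ⟨fun i => if i ∈ S then 1 else 0, ⟨?_, ?_⟩, by simp⟩ <;>
    intro i <;> by_cases hi : i ∈ S <;> simp [hi]

theorem exists_add_smul_mem_Icc_mem_facet {ι : Type*} [Finite ι] {α : ι → ℝ} (hα : α ≠ 0)
    {t : ι → ℝ} (ht : t ∈ Icc (0 : ι → ℝ) 1) :
    ∃ r : ℝ, t + r • α ∈ Icc (0 : ι → ℝ) 1 ∧
      ∃ i, (t + r • α) i = if 0 < α i then 1 else 0 := by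
  set facet : ι → ℝ := fun i => if 0 < α i then 1 else 0
  obtain ⟨k, hk⟩ := Function.ne_iff.1 hα
  obtain ⟨i, hi, hmin⟩ := Set.exists_min_image {i | α i ≠ 0}
    (fun i => (facet i - t i) / α i) (Set.toFinite _) ⟨k, hk⟩
  -- The first time at which `t + r • α` leaves the cube.
  set r := (facet i - t i) / α i with hr
  have hr0 : 0 ≤ r := by
    rcases lt_or_gt_of_ne hi with hneg | hpos
    · exact div_nonneg_of_nonpos (by simpa [facet, hneg.not_gt] using ht.1 i) hneg.le
    · exact div_nonneg (by simpa [facet, hpos] using ht.2 i) hpos.le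
  have hcube : ∀ j, t j + r * α j ∈ Icc (0 : ℝ) 1 := by
    intro j
    have h0 : 0 ≤ t j := ht.1 j
    have h1 : t j ≤ 1 := ht.2 j
    rcases lt_trichotomy (α j) 0 with hneg | hzero | hpos
    · have hexit : r ≤ -t j / α j := by simpa [facet, hneg.not_gt] using hmin j hneg.ne
      rw [le_div_iff_of_neg hneg] at hexit
      exact ⟨by linarith, by nlinarith⟩
    · simp [hzero, h0, h1]
    · have hexit : r ≤ (1 - t j) / α j := by simpa [facet, hpos] using hmin j hpos.ne'
      rw [le_div_iff₀ hpos] at hexit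
      exact ⟨by positivity, by linarith⟩
  refine ⟨r, ⟨fun j => (hcube j).1, fun j => (hcube j).2⟩, i, ?_⟩
  simp [hr, div_mul_cancel₀ _ hi, facet]

theorem parallelepiped_subset_iUnion_vadd [AddCommGroup E] [Module ℝ E] {v : Fin (n + 1) → E}
    (hv : ¬ LinearIndependent ℝ v) :
    ∃ x : Fin (n + 1) → E, parallelepiped v ⊆ ⋃ i, x i +ᵥ parallelepiped (i.removeNth v) := by
  obtain ⟨α, hrel, hne⟩ := Fintype.not_linearIndependent_iff.1 hv
  refine ⟨fun i => (if 0 < α i then (1 : ℝ) else 0) • v i, fun p hp => ?_⟩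
  obtain ⟨t, ht, rfl⟩ := (mem_parallelepiped_iff v p).1 hp
  obtain ⟨r, hcube, i, hi⟩ := exists_add_smul_mem_Icc_mem_facet (Function.ne_iff.2 hne) ht
  have hslide : ∑ j, t j • v j = ∑ j, (t + r • α) j • v j := by
    simp [add_smul, Finset.sum_add_distrib, mul_smul, ← Finset.smul_sum, hrel]
  rw [hslide, Fin.sum_univ_succAbove _ i, hi]
  exact mem_iUnion.2 ⟨i, vadd_mem_vadd_set <| (mem_parallelepiped_iff _ _).2
    ⟨i.removeNth (t + r • α), ⟨fun j => hcube.1 _, fun j => hcube.2 _⟩, rfl⟩⟩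

theorem addHaar_parallelepiped_le_sum_removeNth [NormedAddCommGroup E] [NormedSpace ℝ E]
    [MeasurableSpace E] [BorelSpace E] (b : Module.Basis (Fin n) ℝ E) (v : Fin (n + 1) → E) :
    b.addHaar (parallelepiped v) ≤ ∑ i : Fin (n + 1), ENNReal.ofReal |b.det (i.removeNth v)| := by
  have := Module.Basis.finiteDimensional_of_finite b
  have hdep : ¬ LinearIndependent ℝ v := fun h => by
    simpa [Module.finrank_eq_card_basis b] using h.fintype_card_le_finrank
  obtain ⟨x, hx⟩ := parallelepiped_subset_iUnion_vadd hdep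
  calc b.addHaar (parallelepiped v)
      ≤ ∑ i : Fin (n + 1), b.addHaar (x i +ᵥ parallelepiped (i.removeNth v)) :=
        (measure_mono hx).trans (measure_iUnion_fintype_le _ _)
    _ = ∑ i : Fin (n + 1), ENNReal.ofReal |b.det (i.removeNth v)| := by
        simp only [measure_vadd, Measure.addHaar_parallelepiped]

end Zonotope

theorem basisFun_det_eq_det2 (u v : E2) :
    (EuclideanSpace.basisFun (Fin 2) ℝ).toBasis.det ![u, v] = det2 u v := by
  simp [Module.Basis.det_apply, Matrix.det_fin_two, Module.Basis.toMatrix_apply, det2]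
  ring

theorem volume_parallelepiped_pair (u v : E2) :
    volume (parallelepiped ![u, v]) = ENNReal.ofReal |det2 u v| := by
  rw [← (EuclideanSpace.basisFun (Fin 2) ℝ).addHaar_eq_volume, Measure.addHaar_parallelepiped,
    basisFun_det_eq_det2]

theorem volume_parallelepiped_triple_le (u v w : E2) :
    volume (parallelepiped ![u, v, w]) ≤
      ENNReal.ofReal (|det2 u v| + |det2 v w| + |det2 u w|) := by
  have hle := addHaar_parallelepiped_le_sum_removeNth
    (EuclideanSpace.basisFun (Fin 2) ℝ).toBasis ![u, v, w]
  rw [OrthonormalBasis.addHaar_eq_volume, Fin.sum_univ_three] at hle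
  have h0 : (0 : Fin 3).removeNth ![u, v, w] = ![v, w] := by ext i; fin_cases i <;> rfl
  have h1 : (1 : Fin 3).removeNth ![u, v, w] = ![u, w] := by ext i; fin_cases i <;> rfl
  have h2 : (2 : Fin 3).removeNth ![u, v, w] = ![u, v] := by ext i; fin_cases i <;> rfl
  rw [h0, h1, h2, basisFun_det_eq_det2, basisFun_det_eq_det2, basisFun_det_eq_det2,
    ← ENNReal.ofReal_add (by positivity) (by positivity),
    ← ENNReal.ofReal_add (by positivity) (by positivity)] at hle
  exact hle.trans_eq (congrArg _ (by ring))

theorem inner_eq_sum_mul (u v : E2) : ⟪u, v⟫ = u 0 * v 0 + u 1 * v 1 := by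
  simp [PiLp.inner_apply, Fin.sum_univ_two, mul_comm]

theorem inner_sq_add_det2_sq (u v : E2) : ⟪u, v⟫ ^ 2 + det2 u v ^ 2 = ‖u‖ ^ 2 * ‖v‖ ^ 2 := by
  simp only [← real_inner_self_eq_norm_sq, inner_eq_sum_mul, det2]
  ring

theorem abs_det2_le_norm_mul_norm (u v : E2) : |det2 u v| ≤ ‖u‖ * ‖v‖ :=
  abs_le_of_sq_le_sq
    (by nlinarith [inner_sq_add_det2_sq u v, sq_nonneg ⟪u, v⟫]) (by positivity)

theorem gram_det_eq_zero (u v w : E2) :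
    ‖u‖ ^ 2 * ‖v‖ ^ 2 * ‖w‖ ^ 2 + 2 * ⟪u, v⟫ * ⟪v, w⟫ * ⟪u, w⟫ - ‖w‖ ^ 2 * ⟪u, v⟫ ^ 2 -
      ‖u‖ ^ 2 * ⟪v, w⟫ ^ 2 - ‖v‖ ^ 2 * ⟪u, w⟫ ^ 2 = 0 := by
  simp only [← real_inner_self_eq_norm_sq, inner_eq_sum_mul]
  ring

theorem abs_eq_half_of_sum_sq_le {S x y z : ℝ} (hS : 0 < S)
    (hgram : S ^ 3 + 2 * x * y * z = S * (x ^ 2 + y ^ 2 + z ^ 2))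
    (hsum : x ^ 2 + y ^ 2 + z ^ 2 ≤ 3 / 4 * S ^ 2) : |x| = S / 2 := by
  -- Bounding `2yz` by `y ^ 2 + z ^ 2` and factoring `S ^ 3 + |x| ^ 3` turns `hgram` into
  -- `S ^ 2 - S * |x| + x ^ 2 ≤ x ^ 2 + y ^ 2 + z ^ 2`, whose left side is at least `3 / 4 * S ^ 2`.
  have hamgm : -(|x| * (y ^ 2 + z ^ 2)) ≤ 2 * x * y * z := by
    rcases abs_cases x with ⟨hx, h0⟩ | ⟨hx, h0⟩ <;> rw [hx]
    · nlinarith [mul_nonneg h0 (sq_nonneg (y + z))]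
    · nlinarith [mul_nonneg (neg_nonneg.2 h0.le) (sq_nonneg (y - z))]
  have hsq : (S + |x|) * (|x| - S / 2) ^ 2 ≤ 0 := by
    nlinarith [sq_abs x, mul_le_mul_of_nonneg_left hsum (add_nonneg hS.le (abs_nonneg x))]
  have hzero : (|x| - S / 2) ^ 2 = 0 :=
    le_antisymm (nonpos_of_mul_nonpos_right hsq (by positivity)) (sq_nonneg _)
  linarith [pow_eq_zero_iff two_ne_zero |>.1 hzero]

theorem add_add_eq_zero_of_inner_eq {V : Type*} [NormedAddCommGroup V] [InnerProductSpace ℝ V]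
    {u v w : V} {s : ℝ} (hu : ‖u‖ = s) (hv : ‖v‖ = s) (hw : ‖w‖ = s)
    (h : ⟪u, v⟫ + ⟪v, w⟫ + ⟪u, w⟫ = -(3 / 2 * s ^ 2)) : u + v + w = 0 := by
  rw [← norm_eq_zero, ← sq_eq_zero_iff, norm_add_sq_real, norm_add_sq_real, inner_add_left,
    hu, hv, hw]
  linarith

theorem sum_inner_sq_le_of_le_sum_abs_det2 {s : ℝ} {u v w : E2}
    (hu : ‖u‖ = s) (hv : ‖v‖ = s) (hw : ‖w‖ = s)
    (h : 3 * √3 / 2 * s ^ 2 ≤ |det2 u v| + |det2 v w| + |det2 u w|) :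
    ⟪u, v⟫ ^ 2 + ⟪v, w⟫ ^ 2 + ⟪u, w⟫ ^ 2 ≤ 3 / 4 * (s ^ 2) ^ 2 := by
  have huv := inner_sq_add_det2_sq u v
  have hvw := inner_sq_add_det2_sq v w
  have huw := inner_sq_add_det2_sq u w
  rw [hu, hv] at huv
  rw [hv, hw] at hvw
  rw [hu, hw] at huw
  have hsq : 27 / 4 * (s ^ 2) ^ 2 ≤ (|det2 u v| + |det2 v w| + |det2 u w|) ^ 2 :=
    calc 27 / 4 * (s ^ 2) ^ 2 = (3 * √3 / 2 * s ^ 2) ^ 2 := by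
          linear_combination -(9 / 4 * (s ^ 2) ^ 2) * Real.sq_sqrt (zero_le_three (α := ℝ))
      _ ≤ _ := pow_le_pow_left₀ (by positivity) h 2
  have hqm : (|det2 u v| + |det2 v w| + |det2 u w|) ^ 2 ≤
      3 * (det2 u v ^ 2 + det2 v w ^ 2 + det2 u w ^ 2) := by
    simpa [Fin.sum_univ_three] using
      sq_sum_le_card_mul_sum_sq (s := Finset.univ) (f := ![|det2 u v|, |det2 v w|, |det2 u w|])
  linarith

theorem abs_inner_eq_half_of_le_sum_abs_det2 {s : ℝ} (hs : 0 < s) {u v w : E2}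
    (hu : ‖u‖ = s) (hv : ‖v‖ = s) (hw : ‖w‖ = s)
    (h : 3 * √3 / 2 * s ^ 2 ≤ |det2 u v| + |det2 v w| + |det2 u w|) :
    |⟪u, v⟫| = s ^ 2 / 2 ∧ |⟪v, w⟫| = s ^ 2 / 2 ∧ |⟪u, w⟫| = s ^ 2 / 2 := by
  have hsum := sum_inner_sq_le_of_le_sum_abs_det2 hu hv hw h
  have hgram := gram_det_eq_zero u v w
  rw [hu, hv, hw] at hgram
  have hS : 0 < s ^ 2 := by positivity
  refine ⟨abs_eq_half_of_sum_sq_le (y := ⟪v, w⟫) (z := ⟪u, w⟫) hS ?_ (by linarith),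
    abs_eq_half_of_sum_sq_le (y := ⟪u, v⟫) (z := ⟪u, w⟫) hS ?_ (by linarith),
    abs_eq_half_of_sum_sq_le (y := ⟪u, v⟫) (z := ⟪v, w⟫) hS ?_ (by linarith)⟩ <;>
  linear_combination hgram

theorem signed_sum_eq_zero_of_le_sum_abs_det2 {s : ℝ} (hs : 0 < s) {u v w : E2}
    (hu : ‖u‖ = s) (hv : ‖v‖ = s) (hw : ‖w‖ = s)
    (h : 3 * √3 / 2 * s ^ 2 ≤ |det2 u v| + |det2 v w| + |det2 u w|) :
    u + v + w = 0 ∨ -u + v + w = 0 ∨ u + -v + w = 0 ∨ u + v + -w = 0 := by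
  obtain ⟨hx, hy, hz⟩ := abs_inner_eq_half_of_le_sum_abs_det2 hs hu hv hw h
  have hgram := gram_det_eq_zero u v w
  rw [hu, hv, hw] at hgram
  have hpos : 0 < (s ^ 2) ^ 3 := by positivity
  -- `hgram` forces the product of the three inner products to be negative.
  rcases eq_or_eq_neg_of_abs_eq hx with hx | hx <;>
    rcases eq_or_eq_neg_of_abs_eq hy with hy | hy <;>
    rcases eq_or_eq_neg_of_abs_eq hz with hz | hz <;> rw [hx, hy, hz] at hgram
  · linarith
  · refine Or.inr (Or.inr (Or.inl (add_add_eq_zero_of_inner_eq hu ((norm_neg v).trans hv) hw ?_)))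
    simp only [inner_neg_left, inner_neg_right, hx, hy, hz]
    ring
  · refine Or.inr (Or.inl (add_add_eq_zero_of_inner_eq ((norm_neg u).trans hu) hv hw ?_))
    simp only [inner_neg_left, hx, hy, hz]
    ring
  · linarith
  · refine Or.inr (Or.inr (Or.inr (add_add_eq_zero_of_inner_eq hu hv ((norm_neg w).trans hw) ?_)))
    simp only [inner_neg_right, hx, hy, hz]
    ring
  · linarith
  · linarith
  · refine Or.inl (add_add_eq_zero_of_inner_eq hu hv hw ?_)
    simp only [hx, hy, hz]
    ring

/-- The convex hull of `A`, `B`, `C` and of their reflections in `o`. It is the centrally symmetric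
hexagon with consecutive vertices `A, B, C, 2o - A, 2o - B, 2o - C` if these six points are in
convex position in that order, but it may also be a parallelogram or a hexagon with its vertices
listed in another order. -/
def symmHexagon (o A B C : E2) : Set E2 :=
  convexHull ℝ {A, B, C, (2 : ℝ) • o - A, (2 : ℝ) • o - B, (2 : ℝ) • o - C}

theorem symmHexagon_rotate (o A B C : E2) :
    symmHexagon o B C ((2 : ℝ) • o - A) = symmHexagon o A B C := by
  rw [symmHexagon, symmHexagon, sub_sub_cancel]
  congr 1
  ext x
  simp only [mem_insert_iff, mem_singleton_iff]
  tauto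

theorem symmHexagon_subset_vadd_parallelepiped (o A B C : E2) :
    symmHexagon o A B C ⊆
      A +ᵥ parallelepiped ![B - A, C - B, (2 : ℝ) • o - A - C] := by
  set v : Fin 3 → E2 := ![B - A, C - B, (2 : ℝ) • o - A - C] with hv
  have hvertex (S : Finset (Fin 3)) : A + ∑ i ∈ S, v i ∈ A +ᵥ parallelepiped v :=
    vadd_mem_vadd_set (sum_mem_parallelepiped v S)
  refine convexHull_min ?_ ((convex_parallelepiped v).vadd A)
  rintro x (rfl | rfl | rfl | rfl | rfl | rfl)
  · simpa using hvertex ∅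
  · simpa [hv] using hvertex {0}
  · simpa [hv] using hvertex {0, 1}
  · simpa [hv, Fin.sum_univ_three, add_assoc] using hvertex Finset.univ
  · convert hvertex {1, 2} using 1
    simp [hv]
    abel
  · convert hvertex {2} using 1
    simp [hv]
    abel

theorem volume_symmHexagon_le (o A B C : E2) :
    volume (symmHexagon o A B C) ≤ ENNReal.ofReal
      (|det2 (B - A) (C - B)| + |det2 (C - B) ((2 : ℝ) • o - A - C)| +
        |det2 (B - A) ((2 : ℝ) • o - A - C)|) := by
  refine (measure_mono (symmHexagon_subset_vadd_parallelepiped o A B C)).trans ?_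
  rw [measure_vadd]
  exact volume_parallelepiped_triple_le _ _ _

theorem symmHexagon_center_subset_vadd_parallelepiped (o B C : E2) :
    symmHexagon o o B C ⊆ ((2 : ℝ) • o - B) +ᵥ parallelepiped ![B - o + (C - o), B - C] := by
  set v : Fin 2 → E2 := ![B - o + (C - o), B - C] with hv
  set P : Set E2 := ((2 : ℝ) • o - B) +ᵥ parallelepiped v
  have hconvex : Convex ℝ P := (convex_parallelepiped v).vadd _
  have hvertex (S : Finset (Fin 2)) : (2 : ℝ) • o - B + ∑ i ∈ S, v i ∈ P :=
    vadd_mem_vadd_set (sum_mem_parallelepiped v S)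
  have hB' : (2 : ℝ) • o - B ∈ P := by simpa using hvertex ∅
  have hC : C ∈ P := by
    convert hvertex {0} using 1
    simp only [hv, Finset.sum_singleton, Matrix.cons_val_zero]
    module
  have hC' : (2 : ℝ) • o - C ∈ P := by simpa [hv] using hvertex {1}
  have hB : B ∈ P := by
    convert hvertex Finset.univ using 1
    simp only [hv, Fin.sum_univ_two, Matrix.cons_val_zero, Matrix.cons_val_one]
    module
  have ho : o ∈ P := by
    convert hconvex.midpoint_mem hB hB' using 1
    rw [midpoint_eq_smul_add, invOf_eq_inv]
    module
  have ho' : (2 : ℝ) • o - o = o := by module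
  rw [symmHexagon, ho']
  refine convexHull_min ?_ hconvex
  rintro x (rfl | rfl | rfl | rfl | rfl | rfl) <;> assumption

theorem volume_symmHexagon_center_le (o B C : E2) :
    volume (symmHexagon o o B C) ≤ ENNReal.ofReal (2 * (dist B o * dist C o)) := by
  have hdet : det2 (B - o + (C - o)) (B - C) = -(2 * det2 (B - o) (C - o)) := by
    simp only [det2, PiLp.add_apply, PiLp.sub_apply]
    ring
  refine (measure_mono (symmHexagon_center_subset_vadd_parallelepiped o B C)).trans ?_
  rw [measure_vadd, volume_parallelepiped_pair, hdet, abs_neg, abs_mul, abs_two, dist_eq_norm,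
    dist_eq_norm]
  gcongr
  exact abs_det2_le_norm_mul_norm _ _

theorem image_symmHexagon (f : E2 →ᵃ[ℝ] E2) (o A B C : E2) :
    f '' symmHexagon o A B C = symmHexagon (f o) (f A) (f B) (f C) := by
  have hreflect (x : E2) : f ((2 : ℝ) • o - x) = (2 : ℝ) • f o - f x := by
    have hline (y z : E2) : (2 : ℝ) • z - y = AffineMap.lineMap y z (2 : ℝ) := by
      rw [AffineMap.lineMap_apply_module]
      module
    rw [hline, hline, f.apply_lineMap]
  simp only [symmHexagon, AffineMap.image_convexHull, image_insert_eq, image_singleton, hreflect]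

theorem hexVertex_add_three (k : ℕ) : hexVertex (k + 3) = -hexVertex k := by
  have hangle : ((k : ℝ) + 3) * π / 3 = k * π / 3 + π := by ring
  ext i
  fin_cases i <;> simp [hexVertex, hangle, Real.cos_add_pi, Real.sin_add_pi]

theorem hexVertex_zero : hexVertex 0 = !₂[1, 0] := by
  simp [hexVertex]

theorem hexVertex_one : hexVertex 1 = !₂[1 / 2, √3 / 2] := by
  simp [hexVertex]

theorem hexVertex_two : hexVertex 2 = !₂[-1 / 2, √3 / 2] := by
  have hangle : 2 * π / 3 = π - π / 3 := by ring
  simp [hexVertex, hangle, neg_div]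

theorem stdHexagon_eq_symmHexagon :
    stdHexagon = symmHexagon 0 (hexVertex 0) (hexVertex 1) (hexVertex 2) := by
  have hrange : (Set.range fun k : Fin 6 => hexVertex k) = {hexVertex 0, hexVertex 1, hexVertex 2,
      hexVertex (0 + 3), hexVertex (1 + 3), hexVertex (2 + 3)} := by
    ext x
    simp [Fin.exists_fin_succ, eq_comm]
  simp only [stdHexagon, symmHexagon, hrange, hexVertex_add_three, smul_zero, zero_sub]

/-- The affine map of the plane sending the origin to `o` and the standard basis to `e`, `f`. -/
def affineFrame (o e f : E2) : E2 →ᵃ[ℝ] E2 :=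
  AffineMap.const ℝ E2 o +
    ((EuclideanSpace.basisFun (Fin 2) ℝ).toBasis.constr ℝ ![e, f]).toAffineMap

theorem affineFrame_apply (o e f x : E2) : affineFrame o e f x = o + (x 0 • e + x 1 • f) := by
  simp [affineFrame, Module.Basis.constr_apply_fintype, Fin.sum_univ_two]

theorem isSimilarity_affineFrame {s : ℝ} (hs : 0 < s) (o : E2) {e f : E2}
    (he : ‖e‖ = s) (hf : ‖f‖ = s) (hef : ⟪e, f⟫ = 0) : IsSimilarity (affineFrame o e f) := by
  refine ⟨s, hs, fun x y => ?_⟩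
  have hsub : affineFrame o e f x - affineFrame o e f y = (x - y) 0 • e + (x - y) 1 • f := by
    simp only [affineFrame_apply, PiLp.sub_apply]
    module
  rw [dist_eq_norm, dist_eq_norm, hsub, ← sq_eq_sq₀ (norm_nonneg _) (by positivity), mul_pow,
    norm_add_sq_real, EuclideanSpace.real_norm_sq_eq (x - y), Fin.sum_univ_two]
  simp only [norm_smul, mul_pow, inner_smul_left, inner_smul_right, hef, he, hf, Real.norm_eq_abs,
    sq_abs]
  ring

theorem exists_orthogonal_of_norm_add_eq {V : Type*} [NormedAddCommGroup V]
    [InnerProductSpace ℝ V] {s : ℝ} {a c : V} (ha : ‖a‖ = s) (hc : ‖c‖ = s) (hac : ‖a + c‖ = s) :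
    ∃ f : V, √3 • f = a + (2 : ℝ) • c ∧ ‖f‖ = s ∧ ⟪a, f⟫ = 0 := by
  have h3 : √3 ^ 2 = 3 := Real.sq_sqrt zero_le_three
  have h3pos : 0 < √3 := by positivity
  have hinner : ⟪a, c⟫ = -(s ^ 2 / 2) := by
    have hexpand := norm_add_sq_real a c
    rw [ha, hc, hac] at hexpand
    linarith
  obtain ⟨f, hf⟩ : ∃ f, √3 • f = a + (2 : ℝ) • c :=
    ⟨(√3)⁻¹ • (a + (2 : ℝ) • c), smul_inv_smul₀ h3pos.ne' _⟩
  refine ⟨f, hf, ?_, ?_⟩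
  · have hnorm : (√3 * ‖f‖) ^ 2 = 3 * s ^ 2 := by
      rw [← norm_smul_of_nonneg h3pos.le, hf, norm_add_sq_real, norm_smul, inner_smul_right, ha, hc,
        hinner, Real.norm_two]
      ring
    rw [mul_pow, h3] at hnorm
    exact (sq_eq_sq₀ (norm_nonneg f) (ha ▸ norm_nonneg a)).1 (by linarith)
  · have hsmul : √3 * ⟪a, f⟫ = 0 := by
      rw [← inner_smul_right, hf, inner_add_right, inner_smul_right, real_inner_self_eq_norm_sq, ha,
        hinner]
      ring
    exact (mul_eq_zero.1 hsmul).resolve_left h3pos.ne'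

theorem isRegularHexagon_symmHexagon {s : ℝ} (hs : 0 < s) (o : E2) {a c : E2}
    (ha : ‖a‖ = s) (hc : ‖c‖ = s) (hac : ‖a + c‖ = s) :
    IsRegularHexagon (symmHexagon o (o + a) (o + (a + c)) (o + c)) := by
  obtain ⟨f, hf, hfnorm, haf⟩ := exists_orthogonal_of_norm_add_eq ha hc hac
  refine ⟨affineFrame o a f, isSimilarity_affineFrame hs o ha hfnorm haf, ?_⟩
  rw [stdHexagon_eq_symmHexagon, image_symmHexagon, hexVertex_zero, hexVertex_one, hexVertex_two]
  congr 1 <;> simp only [affineFrame_apply, PiLp.zero_apply, Matrix.cons_val_zero,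
    Matrix.cons_val_one]
  · module
  · module
  · linear_combination (norm := module) (-(1 / 2 : ℝ)) • hf
  · linear_combination (norm := module) (-(1 / 2 : ℝ)) • hf

theorem sub_eq_add_or_eq_center_of_le_volume_symmHexagon {s : ℝ} (hs : 0 < s) {o A B C : E2}
    (hAB : dist A B = s) (hBC : dist B C = s) (hCA : dist C ((2 : ℝ) • o - A) = s)
    (harea : ENNReal.ofReal (3 * √3 / 2 * s ^ 2) ≤ volume (symmHexagon o A B C)) :
    B - o = A - o + (C - o) ∨ A = o ∨ B = o ∨ C = o := by
  have hle := (ENNReal.ofReal_le_ofReal_iff (by positivity)).1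
    (harea.trans (volume_symmHexagon_le o A B C))
  rw [dist_comm, dist_eq_norm] at hAB hBC hCA
  have htwo {x y : E2} (h : (2 : ℝ) • (x - y) = 0) : x = y :=
    sub_eq_zero.1 ((smul_eq_zero_iff_right two_ne_zero).1 h)
  rcases signed_sum_eq_zero_of_le_sum_abs_det2 hs hAB hBC ((congrArg _ (by abel)).trans hCA) hle
    with h | h | h | h
  · exact Or.inr (Or.inl (htwo (by linear_combination (norm := module) -h)))
  · exact Or.inr (Or.inr (Or.inl (htwo (by linear_combination (norm := module) -h))))
  · exact Or.inl (htwo (by linear_combination (norm := module) h))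
  · exact Or.inr (Or.inr (Or.inr (htwo (by linear_combination (norm := module) h))))

theorem ne_center_of_le_volume_symmHexagon {s : ℝ} (hs : 0 < s) {o A B C : E2}
    (hAB : dist A B = s) (hCA : dist C ((2 : ℝ) • o - A) = s)
    (harea : ENNReal.ofReal (3 * √3 / 2 * s ^ 2) ≤ volume (symmHexagon o A B C)) : A ≠ o := by
  rintro rfl
  have hA : (2 : ℝ) • A - A = A := by module
  rw [hA] at hCA
  have hle := (ENNReal.ofReal_le_ofReal_iff (by positivity)).1
    (harea.trans (volume_symmHexagon_center_le A B C))
  rw [dist_comm B, hAB, hCA] at hle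
  have h3 : 4 / 3 < √3 := (Real.lt_sqrt (by norm_num)).2 (by norm_num)
  nlinarith [mul_pos hs hs]

theorem statement8_general {s : ℝ} (hs : 0 < s) {o A B C : E2}
    (hAB : dist A B = s) (hBC : dist B C = s) (hCA : dist C ((2 : ℝ) • o - A) = s)
    (harea : ENNReal.ofReal (3 * √3 / 2 * s ^ 2) ≤ volume (symmHexagon o A B C)) :
    IsRegularHexagon (symmHexagon o A B C) := by
  have hAB' : dist ((2 : ℝ) • o - A) ((2 : ℝ) • o - B) = s := by rwa [dist_sub_left]
  have hBC' : dist ((2 : ℝ) • o - B) ((2 : ℝ) • o - C) = s := by rwa [dist_sub_left]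
  have hareaB := harea.trans_eq (congrArg _ (symmHexagon_rotate o A B C).symm)
  have hareaC := hareaB.trans_eq (congrArg _ (symmHexagon_rotate o B C _).symm)
  rcases sub_eq_add_or_eq_center_of_le_volume_symmHexagon hs hAB hBC hCA harea with h | h | h | h
  · have ha : A - o = B - C := by linear_combination (norm := module) -h
    have hc : C - o = B - A := by linear_combination (norm := module) -h
    have hac : A - o + (C - o) = -((2 : ℝ) • o - A - C) := by module
    have hregular := isRegularHexagon_symmHexagon hs o (a := A - o) (c := C - o)
      (by rw [ha, ← dist_eq_norm, hBC]) (by rw [hc, ← dist_eq_norm, dist_comm, hAB])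
      (by rw [hac, norm_neg, ← dist_eq_norm, dist_comm, hCA])
    simpa [← h] using hregular
  · exact absurd h (ne_center_of_le_volume_symmHexagon hs hAB hCA harea)
  · exact absurd h (ne_center_of_le_volume_symmHexagon hs hBC hAB' hareaB)
  · exact absurd h (ne_center_of_le_volume_symmHexagon hs hCA hBC' hareaC)

/-- A centrally symmetric convex hexagon with six distinct vertices,
all of whose sides have length `s > 0` and whose area equals `(3√3/2)s²`, is a regular
hexagon. -/
theorem statement8 (s : ℝ) (hs : 0 < s) (H : Set E2) (A B C D E F : E2)
    (hvert : HexWithVertices A B C D E F H)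
    (horder : CCWList A B C D E F ∨ CCWList F E D C B A)
    (hdistinct : [A, B, C, D, E, F].Pairwise (· ≠ ·))
    (hAB : dist A B = s) (hBC : dist B C = s) (hCD : dist C D = s)
    (hDE : dist D E = s) (hEF : dist E F = s) (hFA : dist F A = s)
    (harea : volume H = ENNReal.ofReal (3 * Real.sqrt 3 / 2 * s ^ 2)) :
    IsRegularHexagon H := by
  obtain ⟨rfl, ⟨o, rfl, rfl, rfl⟩, -⟩ := hvert
  exact statement8_general hs hAB hBC hCD harea.ge
end
end
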